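/- Every finitely generated solvable minimax group belongs to the class 𝒰. -/

import Mathlib

/-!
Statement 18: every finitely generated solvable minimax group belongs to the
class `𝒰`.
-/

open CategoryTheory

noncomputable section




/-- The rational circle `ℚ/ℤ`. -/
abbrev RatCircle : Type := ℚ ⧸ AddSubgroup.zmultiples (1 : ℚ)

/-- The quasicyclic (Prüfer) `p`-group, realized as the `p`-primary part of `ℚ/ℤ`. -/
def pruferSubgroup (p : ℕ) : AddSubgroup RatCircle where
  carrier := {x | ∃ n : ℕ, (p ^ n : ℕ) • x = 0}
  zero_mem' := ⟨0, smul_zero _⟩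
  add_mem' := by
    rintro a b ⟨m, hm⟩ ⟨n, hn⟩
    refine ⟨m + n, ?_⟩
    have ha : (p ^ m * p ^ n) • a = 0 := by rw [mul_comm, mul_smul, hm, smul_zero]
    have hb : (p ^ m * p ^ n) • b = 0 := by rw [mul_smul, hn, smul_zero]
    rw [smul_add, pow_add, ha, hb, add_zero]
  neg_mem' := by
    rintro a ⟨m, hm⟩
    exact ⟨m, by rw [smul_neg, hm, neg_zero]⟩

/-- A group has a quasicyclic `p`-section if some quotient of a subgroup is
isomorphic to the Prüfer `p`-group. -/
def HasQuasicyclicSection (G : Type*) [Group G] (p : ℕ) : Prop :=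
  ∃ (H : Subgroup G) (K : Subgroup H) (_ : K.Normal),
    Nonempty ((H ⧸ K) ≃* Multiplicative (pruferSubgroup p))

/-- The spectrum of a group: the set of primes `p` such that the group has a
section isomorphic to the quasicyclic `p`-group. -/
def groupSpectrum (G : Type*) [Group G] : Set ℕ :=
  {p | p.Prime ∧ HasQuasicyclicSection G p}

/-- The spectrum of an (additive) abelian group, via `Multiplicative`. -/
abbrev addSpectrum (A : Type*) [AddGroup A] : Set ℕ :=
  groupSpectrum (Multiplicative A)

/-- An abelian group has finite rank if its torsion-free rank and all of its
`p`-ranks are finite. -/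
def FiniteRankAbelian (A : Type*) [AddCommGroup A] : Prop :=
  (∃ n : ℕ, ∀ k : ℕ, (∃ f : (Fin k →₀ ℤ) →+ A, Function.Injective f) → k ≤ n) ∧
  ∀ p : ℕ, p.Prime → {a : A | (p : ℕ) • a = 0}.Finite

/-- A group has finite rank (in the sense appropriate for abelian groups:
finite torsion-free rank and finite `p`-ranks). -/
def FiniteRankGroup (G : Type*) [Group G] : Prop :=
  (∃ n : ℕ, ∀ k : ℕ,
    (∃ f : Multiplicative (Fin k →₀ ℤ) →* G, Function.Injective f) → k ≤ n) ∧
  ∀ p : ℕ, p.Prime → {g : G | g ^ p = 1}.Finite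

/-- A solvable group of finite rank: a solvable group all of whose abelian
sections have finite rank. -/
def SolvableOfFiniteRank (G : Type*) [Group G] : Prop :=
  IsSolvable G ∧
    ∀ (H : Subgroup G) (K : Subgroup H) (_ : K.Normal),
      (∀ x y : H ⧸ K, x * y = y * x) → FiniteRankGroup (H ⧸ K)

/-- A group is virtually abelian. -/
def VirtuallyAbelian (G : Type*) [Group G] : Prop :=
  ∃ H : Subgroup G, H.index ≠ 0 ∧ ∀ x y : H, x * y = y * x

/-- A `ℤG`-module (given as an object of `Rep ℤ G`) whose underlying abelian group
is torsion-free, of finite rank, and `π`-spectral. -/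
def NiceRep {G : Type} [Group G] (π : Set ℕ) (M : Rep.{0} ℤ G) : Prop :=
  (∀ g : M, g ≠ 0 → ¬IsOfFinAddOrder g) ∧ FiniteRankAbelian M ∧ addSpectrum M ⊆ π

/-- The class `𝒰` of solvable groups of finite rank. -/
def MemClassU (G : Type) [Group G] : Prop :=
  SolvableOfFiniteRank G ∧
  ∃ (N : Subgroup G) (_ : N.Normal),
    Group.IsNilpotent N ∧
    Group.FG (G ⧸ N) ∧ VirtuallyAbelian (G ⧸ N) ∧
    ∃ (r : ℕ) (T : Fin (r + 1) → Subgroup G),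
      Monotone T ∧ T 0 = ⊥ ∧
      ((T (Fin.last r) : Set G) = {g : G | g ∈ N ∧ IsOfFinOrder g}) ∧
      (∀ (i : Fin (r + 1)) (g t : G), t ∈ T i → g * t * g⁻¹ ∈ T i) ∧
      (∀ (i : Fin r) (n t : G), n ∈ N → t ∈ T i.succ →
        n * t * n⁻¹ * t⁻¹ ∈ T i.castSucc) ∧
      (∀ i : Fin r, (T i.castSucc).relIndex (T i.succ) = 0 →
        ∃ M : Rep.{0} ℤ (G ⧸ N), NiceRep (groupSpectrum G) M ∧
          ∃ φ : M → G,
            (∀ m : M, φ m ∈ T i.succ) ∧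
            (∀ m m' : M, (φ (m + m'))⁻¹ * (φ m * φ m') ∈ T i.castSucc) ∧
            (∀ t : G, t ∈ T i.succ → ∃ m : M, (φ m)⁻¹ * t ∈ T i.castSucc) ∧
            (∀ (g : G) (m : M),
              (φ (M.ρ (QuotientGroup.mk g) m))⁻¹ * (g * φ m * g⁻¹) ∈ T i.castSucc))

/-- A solvable minimax group: there is a subnormal series of finite length each of
whose factors is cyclic or quasicyclic. -/
def IsMinimax (G : Type*) [Group G] : Prop :=
  ∃ (r : ℕ) (c : Fin (r + 1) → Subgroup G),
    Monotone c ∧ c 0 = ⊥ ∧ c (Fin.last r) = ⊤ ∧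
    ∀ i : Fin r, ∃ _ : ((c i.castSucc).subgroupOf (c i.succ)).Normal,
      IsCyclic ((c i.succ) ⧸ (c i.castSucc).subgroupOf (c i.succ)) ∨
      ∃ p : ℕ, p.Prime ∧
        Nonempty (((c i.succ) ⧸ (c i.castSucc).subgroupOf (c i.succ)) ≃*
          Multiplicative (pruferSubgroup p))

open scoped commutatorElement


/-- `A` is a `p`-torsion group whose cyclic subgroups form a chain. -/
def Uni (p : ℕ) (A : Type) [AddCommGroup A] : Prop :=
  (∀ a : A, ∃ k : ℕ, (p ^ k) • a = 0) ∧ ∀ a b : A, (∃ n : ℤ, a = n • b) ∨ ∃ n : ℤ, b = n • a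

/-- `A` is cyclic. -/
def Cyc (A : Type) [AddCommGroup A] : Prop := ∃ h : A, ∀ a : A, ∃ n : ℤ, a = n • h

/-- Admissible factors. -/
def Fac (S : Set ℕ) (A : Type) [AddCommGroup A] : Prop :=
  Cyc A ∨ ∃ p ∈ S, p.Prime ∧ Uni p A

/-- Abelian minimax groups with quasicyclic factors for primes in `S`. -/
inductive AMin (S : Set ℕ) : (A : Type) → [AddCommGroup A] → Prop
  | triv (A : Type) [AddCommGroup A] (h : Subsingleton A) : AMin S A
  | ext (A : Type) [AddCommGroup A] (B : AddSubgroup A) (hB : AMin S B) (h : Fac S (A ⧸ B)) :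
      AMin S A

theorem Uni.of_surj {p : ℕ} {A B : Type} [AddCommGroup A] [AddCommGroup B] (h : Uni p A)
    (f : A →+ B) (hf : Function.Surjective f) : Uni p B := by
  refine ⟨fun b => ?_, fun a b => ?_⟩
  · obtain ⟨a, rfl⟩ := hf b
    obtain ⟨k, hk⟩ := h.1 a
    exact ⟨k, by rw [← map_nsmul, hk, map_zero]⟩
  · obtain ⟨a, rfl⟩ := hf a
    obtain ⟨b, rfl⟩ := hf b
    rcases h.2 a b with ⟨n, hn⟩ | ⟨n, hn⟩
    · exact Or.inl ⟨n, by rw [← map_zsmul, ← hn]⟩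
    · exact Or.inr ⟨n, by rw [← map_zsmul, ← hn]⟩

theorem Uni.of_inj {p : ℕ} {A B : Type} [AddCommGroup A] [AddCommGroup B] (h : Uni p B)
    (f : A →+ B) (hf : Function.Injective f) : Uni p A := by
  refine ⟨fun a => ?_, fun a b => ?_⟩
  · obtain ⟨k, hk⟩ := h.1 (f a)
    exact ⟨k, hf (by rw [map_nsmul, hk, map_zero])⟩
  · rcases h.2 (f a) (f b) with ⟨n, hn⟩ | ⟨n, hn⟩
    · exact Or.inl ⟨n, hf (by rw [map_zsmul, ← hn])⟩
    · exact Or.inr ⟨n, hf (by rw [map_zsmul, ← hn])⟩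

theorem Cyc.of_surj {A B : Type} [AddCommGroup A] [AddCommGroup B] (h : Cyc A)
    (f : A →+ B) (hf : Function.Surjective f) : Cyc B := by
  obtain ⟨x, hx⟩ := h
  refine ⟨f x, fun b => ?_⟩
  obtain ⟨a, rfl⟩ := hf b
  obtain ⟨n, hn⟩ := hx a
  exact ⟨n, by rw [← map_zsmul, ← hn]⟩

theorem cyc_iff {A : Type} [AddCommGroup A] : Cyc A ↔ IsAddCyclic A := by
  constructor
  · rintro ⟨h, hh⟩
    exact ⟨h, fun a => by obtain ⟨n, hn⟩ := hh a; exact ⟨n, hn.symm⟩⟩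
  · rintro ⟨h, hh⟩
    exact ⟨h, fun a => by obtain ⟨n, hn⟩ := hh a; exact ⟨n, hn.symm⟩⟩

theorem Cyc.of_inj {A B : Type} [AddCommGroup A] [AddCommGroup B] (h : Cyc B)
    (f : A →+ B) (hf : Function.Injective f) : Cyc A := by
  rw [cyc_iff] at *
  exact isAddCyclic_of_injective f hf

theorem Fac.of_surj {S : Set ℕ} {A B : Type} [AddCommGroup A] [AddCommGroup B] (h : Fac S A)
    (f : A →+ B) (hf : Function.Surjective f) : Fac S B := by
  rcases h with h | ⟨p, hp, hp', h⟩
  · exact Or.inl (h.of_surj f hf)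
  · exact Or.inr ⟨p, hp, hp', h.of_surj f hf⟩

theorem Fac.of_inj {S : Set ℕ} {A B : Type} [AddCommGroup A] [AddCommGroup B] (h : Fac S B)
    (f : A →+ B) (hf : Function.Injective f) : Fac S A := by
  rcases h with h | ⟨p, hp, hp', h⟩
  · exact Or.inl (h.of_inj f hf)
  · exact Or.inr ⟨p, hp, hp', h.of_inj f hf⟩

theorem AMin.of_inj {S : Set ℕ} {B : Type} [AddCommGroup B] (h : AMin S B) :
    ∀ {A : Type} [AddCommGroup A] (f : A →+ B), Function.Injective f → AMin S A := by
  induction h with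
  | triv B h => intro A _ f hf; exact AMin.triv A hf.subsingleton
  | ext B B0 _ hF ih =>
    intro A _ f hf
    refine AMin.ext A (B0.comap f) (ih (f.addSubgroupComap B0) ?_)
      (hF.of_inj (QuotientAddGroup.map (B0.comap f) B0 f le_rfl) ?_)
    · intro x y hxy
      exact Subtype.ext (hf (congrArg Subtype.val hxy))
    · rw [injective_iff_map_eq_zero]
      intro x
      induction x using QuotientAddGroup.induction_on with
      | H x =>
        intro hx
        rw [QuotientAddGroup.map_mk, QuotientAddGroup.eq_zero_iff] at hx
        rwa [QuotientAddGroup.eq_zero_iff]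

theorem AMin.of_surj {S : Set ℕ} {A : Type} [AddCommGroup A] (h : AMin S A) :
    ∀ {B : Type} [AddCommGroup B] (f : A →+ B), Function.Surjective f → AMin S B := by
  induction h with
  | triv A h => intro B _ f hf; exact AMin.triv B hf.subsingleton
  | ext A A0 _ hF ih =>
    intro B _ f hf
    refine AMin.ext B (A0.map f) (ih (f.addSubgroupMap A0) (f.addSubgroupMap_surjective A0))
      (hF.of_surj (QuotientAddGroup.map A0 (A0.map f) f (AddSubgroup.le_comap_map _ _)) ?_)
    intro x
    induction x using QuotientAddGroup.induction_on with
    | H x =>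
      obtain ⟨a, rfl⟩ := hf x
      exact ⟨(a : A ⧸ A0), rfl⟩

theorem AMin.of_ker {S : Set ℕ} {X : Type} [AddCommGroup X] (h : AMin S X) :
    ∀ {A : Type} [AddCommGroup A] (f : A →+ X), AMin S f.ker → AMin S A := by
  induction h with
  | triv X h =>
    intro A _ f hf
    refine hf.of_surj f.ker.subtype (fun a => ⟨⟨a, Subsingleton.elim _ _⟩, rfl⟩)
  | ext X X0 _ hF ih =>
    intro A _ f hf
    refine AMin.ext A (X0.comap f) (ih (f.addSubgroupComap X0) ?_)
      (hF.of_inj (QuotientAddGroup.map (X0.comap f) X0 f le_rfl) ?_)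
    · refine hf.of_inj (((X0.comap f).subtype.comp (AddSubgroup.subtype _)).codRestrict f.ker ?_) ?_
      · intro x
        have := x.2
        rw [AddMonoidHom.mem_ker] at this
        exact congrArg Subtype.val this
      · intro x y hxy
        have h3 : ((x : X0.comap f) : A) = ((y : X0.comap f) : A) := congrArg (fun z : f.ker => (z : A)) hxy
        exact Subtype.ext (Subtype.ext h3)
    · rw [injective_iff_map_eq_zero]
      intro x
      induction x using QuotientAddGroup.induction_on with
      | H x =>
        intro hx
        rw [QuotientAddGroup.map_mk, QuotientAddGroup.eq_zero_iff] at hx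
        rwa [QuotientAddGroup.eq_zero_iff]

theorem Fac.amin {S : Set ℕ} {A : Type} [AddCommGroup A] (h : Fac S A) : AMin S A := by
  refine AMin.ext A ⊥ (AMin.triv _ inferInstance)
    (h.of_surj (QuotientAddGroup.mk' ⊥) (QuotientAddGroup.mk'_surjective _))

/-- the dichotomy for uniserial groups -/
theorem Uni.dich {p : ℕ} (hp : p.Prime) {A : Type} [AddCommGroup A] (h : Uni p A) :
    (Cyc A ∧ ∃ k, ∀ a : A, p ^ k • a = 0) ∨ ∀ a : A, ∃ b : A, a = p • b := by
  by_cases hA : ∃ x : A, ∀ a, ∃ n : ℤ, a = n • x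
  · left
    refine ⟨hA, ?_⟩
    obtain ⟨x, hx⟩ := hA
    obtain ⟨k, hk⟩ := h.1 x
    refine ⟨k, fun a => ?_⟩
    obtain ⟨n, rfl⟩ := hx a
    rw [smul_comm, hk, smul_zero]
  · right
    push Not at hA
    intro a
    obtain ⟨b, hb⟩ := hA a
    rcases h.2 b a with ⟨n, hn⟩ | ⟨n, hn⟩
    · exact absurd hn (hb n)
    · by_cases hpn : (p : ℤ) ∣ n
      · obtain ⟨m, rfl⟩ := hpn
        exact ⟨m • b, by rw [hn, mul_smul, natCast_zsmul]⟩
      · exfalso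
        obtain ⟨k, hk⟩ := h.1 b
        have hc : IsCoprime n ((p : ℤ) ^ k) := by
          apply IsCoprime.pow_right
          exact ((Prime.coprime_iff_not_dvd (Nat.prime_iff_prime_int.mp hp)).2 hpn).symm
        obtain ⟨u, v, huv⟩ := hc
        apply hb u
        have hk' : ((p : ℤ) ^ k) • b = 0 := by
          have := hk
          rw [← natCast_zsmul] at this
          exact_mod_cast this
        calc b = (1 : ℤ) • b := (one_smul _ _).symm
          _ = u • a := by rw [← huv, add_smul, mul_smul, mul_smul, hk', smul_zero, add_zero, hn]

theorem Cyc.tors_finite {A : Type} [AddCommGroup A] (h : Cyc A) (m : ℕ) (hm : m ≠ 0) :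
    {a : A | m • a = 0}.Finite := by
  have h1 : Cyc (AddMonoidHom.ker (nsmulAddMonoidHom (α := A) m)) :=
    h.of_inj (AddSubgroup.subtype _) (AddSubgroup.subtype_injective _)
  obtain ⟨x, hx⟩ := h1
  have hx0 : m • x = 0 := Subtype.ext x.2
  have : Finite (AddMonoidHom.ker (nsmulAddMonoidHom (α := A) m)) := by
    have hf : Function.Surjective (fun k : Fin m => (k : ℕ) • x) := by
      intro a
      obtain ⟨n, rfl⟩ := hx a
      have hmz : (0 : ℤ) < m := by omega
      refine ⟨⟨(n % m).toNat, by have := Int.emod_lt_of_pos n hmz; omega⟩, ?_⟩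
      simp only
      rw [← natCast_zsmul, Int.toNat_of_nonneg (Int.emod_nonneg _ hmz.ne')]
      conv_rhs => rw [← Int.emod_add_mul_ediv n m, add_smul, mul_comm, mul_smul, natCast_zsmul, hx0]
      simp
    exact Finite.of_surjective _ hf
  exact Set.toFinite (AddMonoidHom.ker (nsmulAddMonoidHom (α := A) m) : Set A)

theorem Uni.tors_finite {p : ℕ} (hp : p.Prime) {A : Type} [AddCommGroup A] (h : Uni p A) (m : ℕ)
    (hm : m ≠ 0) : {a : A | m • a = 0}.Finite := by
  set K := AddMonoidHom.ker (nsmulAddMonoidHom (α := A) m) with hK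
  have h1 : Uni p K := h.of_inj (AddSubgroup.subtype _) (AddSubgroup.subtype_injective _)
  have hx0 : ∀ x : K, m • x = 0 := fun x => Subtype.ext x.2
  have hcyc : Cyc K := by
    rcases h1.dich hp with h2 | h2
    · exact h2.1
    · -- p-divisible and bounded
      have hdiv : ∀ (k : ℕ) (a : K), ∃ b : K, a = p ^ k • b := by
        intro k
        induction k with
        | zero => intro a; exact ⟨a, by simp⟩
        | succ k ih =>
          intro a
          obtain ⟨b, rfl⟩ := ih a
          obtain ⟨c, rfl⟩ := h2 b
          exact ⟨c, by rw [pow_succ, mul_smul]⟩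
      refine ⟨0, fun a => ⟨0, ?_⟩⟩
      obtain ⟨k, r, hr, hmk⟩ := Nat.exists_eq_pow_mul_and_not_dvd hm p hp.ne_one
      obtain ⟨b, rfl⟩ := hdiv k a
      obtain ⟨l, hl⟩ := h1.1 (p ^ k • b)
      have hrb : r • (p ^ k • b) = 0 := by
        rw [← mul_smul, mul_comm, ← hmk, hx0]
      have hg : Nat.gcd r (p ^ l) = 1 := by
        apply Nat.Coprime.pow_right
        exact ((Nat.Prime.coprime_iff_not_dvd hp).2 hr).symm
      have h3 := addOrderOf_dvd_of_nsmul_eq_zero hrb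
      have h4 := addOrderOf_dvd_of_nsmul_eq_zero hl
      have h5 := Nat.dvd_gcd h3 h4
      rw [hg, Nat.dvd_one, AddMonoid.addOrderOf_eq_one_iff] at h5
      rw [h5]; simp
  have hfin := hcyc.tors_finite m hm
  refine (hfin.image (Subtype.val)).subset ?_
  intro a ha
  exact ⟨⟨a, ha⟩, hx0 _, rfl⟩

theorem Fac.tors_finite {S : Set ℕ} {A : Type} [AddCommGroup A] (h : Fac S A) (m : ℕ)
    (hm : m ≠ 0) : {a : A | m • a = 0}.Finite := by
  rcases h with h | ⟨p, hp, hp', h⟩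
  · exact h.tors_finite m hm
  · exact h.tors_finite hp' m hm

theorem AMin.tors_finite {S : Set ℕ} {A : Type} [AddCommGroup A] (h : AMin S A) (m : ℕ)
    (hm : m ≠ 0) : {a : A | m • a = 0}.Finite := by
  induction h with
  | triv A h => exact Set.toFinite _
  | ext A B _ hF ih =>
    have h1 := hF.tors_finite m hm
    have : ({a : A | m • a = 0} ⊆ ⋃ y ∈ {y : A ⧸ B | m • y = 0},
        {a : A | m • a = 0 ∧ (a : A ⧸ B) = y}) := by
      intro a ha
      simp only [Set.mem_iUnion]
      refine ⟨(a : A ⧸ B), ?_, ha, rfl⟩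
      change m • (a : A ⧸ B) = 0
      rw [← QuotientAddGroup.mk_nsmul, (show m • a = 0 from ha)]; rfl
    refine (h1.biUnion fun y _ => ?_).subset this
    by_cases hy : ∃ a0 : A, m • a0 = 0 ∧ (a0 : A ⧸ B) = y
    · obtain ⟨a0, ha0, hy⟩ := hy
      refine (ih.image (fun b : B => a0 + (b : A))).subset ?_
      rintro a ⟨ha, hay⟩
      have hm : -a0 + a ∈ B := by
        rw [← QuotientAddGroup.eq, hy, hay]
      refine ⟨⟨-a0 + a, hm⟩, ?_, by simp⟩
      apply Subtype.ext
      simp [smul_add, ha, ha0]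
    · convert Set.finite_empty
      ext a
      simp only [Set.mem_ofPred_eq, Set.mem_empty_iff_false, iff_false]
      intro h
      exact hy ⟨a, h⟩

theorem AMin.finite_of_bdd {S : Set ℕ} {A : Type} [AddCommGroup A] (h : AMin S A) (m : ℕ)
    (hm : m ≠ 0) (hA : ∀ a : A, m • a = 0) : Finite A := by
  have := h.tors_finite m hm
  rw [← Set.finite_univ_iff]
  exact this.subset (fun a _ => hA a)

theorem Fac.rank_lt {S : Set ℕ} {A : Type} [AddCommGroup A] (h : Fac S A) :
    Module.rank ℤ A < Cardinal.aleph0 := by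
  rcases h with ⟨x, hx⟩ | ⟨p, hp, hp', h⟩
  · have : (LinearMap.toSpanSingleton ℤ A x).range = ⊤ := by
      rw [LinearMap.range_eq_top]
      intro a
      obtain ⟨n, hn⟩ := hx a
      exact ⟨n, by simp [hn]⟩
    have h2 := LinearMap.rank_le_of_surjective (LinearMap.toSpanSingleton ℤ A x)
      (LinearMap.range_eq_top.1 this)
    refine h2.trans_lt ?_
    rw [Module.rank_self]
    exact Cardinal.one_lt_aleph0
  · have : Module.rank ℤ A = 0 := by
      rw [rank_eq_zero_iff]
      intro a
      obtain ⟨k, hk⟩ := h.1 a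
      refine ⟨(p : ℤ) ^ k, pow_ne_zero _ (by exact_mod_cast hp'.ne_zero), ?_⟩
      rw [← hk, ← natCast_zsmul]; push_cast; rfl
    rw [this]
    exact Cardinal.aleph0_pos

theorem AMin.rank_lt {S : Set ℕ} {A : Type} [AddCommGroup A] (h : AMin S A) :
    Module.rank ℤ A < Cardinal.aleph0 := by
  induction h with
  | triv A h => rw [rank_subsingleton']; exact Cardinal.aleph0_pos
  | ext A B _ hF ih =>
    have := rank_quotient_add_rank_of_isDomain (R := ℤ) (AddSubgroup.toIntSubmodule B)
    rw [← this]
    exact Cardinal.add_lt_aleph0 hF.rank_lt ih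

theorem AMin.finiteRank {S : Set ℕ} {A : Type} [AddCommGroup A] (h : AMin S A) :
    FiniteRankAbelian A := by
  refine ⟨?_, fun p hp => h.tors_finite p hp.ne_zero⟩
  obtain ⟨n, hn⟩ := Cardinal.lt_aleph0.1 h.rank_lt
  refine ⟨n, fun k hk => ?_⟩
  obtain ⟨f, hf⟩ := hk
  have := LinearMap.rank_le_of_injective (f.toIntLinearMap) hf
  rw [hn, rank_finsupp_self] at this
  simpa using this

/-- A cyclic group that is `p`-torsion and `p`-divisible is trivial. -/
theorem Cyc.triv_of_div {p : ℕ} {X : Type} [AddCommGroup X] (h : Cyc X)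
    (ht : ∀ a : X, ∃ k : ℕ, p ^ k • a = 0) (hd : ∀ a : X, ∃ b : X, a = p • b) (a : X) : a = 0 := by
  obtain ⟨x, hx⟩ := h
  obtain ⟨b, hb⟩ := hd x
  obtain ⟨n, hn⟩ := hx b
  have key : ∀ k : ℕ, ∃ n : ℤ, x = n • (p ^ k • x) := by
    intro k
    induction k with
    | zero => exact ⟨1, by simp⟩
    | succ k ih =>
      obtain ⟨m, hm⟩ := ih
      refine ⟨m * n, ?_⟩
      have : x = n • (p • x) := by rw [smul_comm, ← hn, ← hb]
      conv_lhs => rw [hm]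
      conv_lhs => rw [this]
      rw [smul_comm (p ^ k) n, ← mul_smul, ← mul_smul (p ^ k), pow_succ]
  obtain ⟨k, hk⟩ := ht x
  obtain ⟨m, hm⟩ := key k
  have hx0 : x = 0 := by rw [hm, hk, smul_zero]
  obtain ⟨l, rfl⟩ := hx a
  rw [hx0, smul_zero]

theorem Fac.mem_of_div {S : Set ℕ} {p : ℕ} (hp : p.Prime) {X : Type} [AddCommGroup X]
    (h : Fac S X) (ht : ∀ a : X, ∃ k : ℕ, p ^ k • a = 0) (hd : ∀ a : X, ∃ b : X, a = p • b)
    (hX : ∃ a : X, a ≠ 0) : p ∈ S := by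
  obtain ⟨a, ha⟩ := hX
  rcases h with h | ⟨q, hq, hq', h⟩
  · exact absurd (h.triv_of_div ht hd a) ha
  · by_cases hpq : p = q
    · rwa [hpq]
    · exfalso
      obtain ⟨k, hk⟩ := ht a
      obtain ⟨l, hl⟩ := h.1 a
      have hg : Nat.gcd (p ^ k) (q ^ l) = 1 :=
        Nat.Coprime.pow _ _ ((Nat.coprime_primes hp hq').2 hpq)
      have h3 := addOrderOf_dvd_of_nsmul_eq_zero hk
      have h4 := addOrderOf_dvd_of_nsmul_eq_zero hl
      have h5 := Nat.dvd_gcd h3 h4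
      rw [hg, Nat.dvd_one, AddMonoid.addOrderOf_eq_one_iff] at h5
      exact ha h5

theorem AMin.mem_of_div {S : Set ℕ} {p : ℕ} (hp : p.Prime) {A : Type} [AddCommGroup A]
    (h : AMin S A) : ∀ {X : Type} [AddCommGroup X] (f : A →+ X), Function.Surjective f →
    (∀ a : X, ∃ k : ℕ, p ^ k • a = 0) → (∀ a : X, ∃ b : X, a = p • b) →
    (∃ a : X, a ≠ 0) → p ∈ S := by
  induction h with
  | triv A h =>
    intro X _ f hf _ _ ⟨a, ha⟩
    have := hf.subsingleton
    exact absurd (Subsingleton.elim _ _) ha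
  | ext A B _ hF ih =>
    intro X _ f hf ht hd hX
    by_cases hB : B.map f = ⊤
    · refine ih (f.comp B.subtype) ?_ ht hd hX
      intro x
      have : x ∈ B.map f := by rw [hB]; trivial
      obtain ⟨b, hb, rfl⟩ := this
      exact ⟨⟨b, hb⟩, rfl⟩
    · have h1 : Fac S (X ⧸ B.map f) := by
        refine hF.of_surj (QuotientAddGroup.map B (B.map f) f (AddSubgroup.le_comap_map _ _)) ?_
        intro x
        induction x using QuotientAddGroup.induction_on with
        | H x =>
          obtain ⟨a, rfl⟩ := hf x
          exact ⟨(a : A ⧸ B), rfl⟩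
      refine h1.mem_of_div hp ?_ ?_ ?_
      · intro x
        induction x using QuotientAddGroup.induction_on with
        | H x =>
          obtain ⟨k, hk⟩ := ht x
          exact ⟨k, by rw [← QuotientAddGroup.mk_nsmul, hk]; rfl⟩
      · intro x
        induction x using QuotientAddGroup.induction_on with
        | H x =>
          obtain ⟨b, rfl⟩ := hd x
          exact ⟨b, rfl⟩
      · by_contra hcon
        push Not at hcon
        apply hB
        rw [eq_top_iff]
        intro x _
        have := hcon (x : X ⧸ B.map f)
        rwa [QuotientAddGroup.eq_zero_iff] at this

theorem div_of_pdiv {p : ℕ} (hp : p.Prime) {X : Type} [AddCommGroup X]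
    (ht : ∀ a : X, ∃ k : ℕ, p ^ k • a = 0) (hd : ∀ a : X, ∃ b : X, a = p • b)
    (n : ℤ) (hn : n ≠ 0) (a : X) : ∃ b : X, n • b = a := by
  have hdiv : ∀ (k : ℕ) (a : X), ∃ b : X, a = p ^ k • b := by
    intro k
    induction k with
    | zero => intro a; exact ⟨a, by simp⟩
    | succ k ih =>
      intro a
      obtain ⟨b, rfl⟩ := ih a
      obtain ⟨c, rfl⟩ := hd b
      exact ⟨c, by rw [pow_succ, mul_smul]⟩
  have hfin : FiniteMultiplicity (p : ℤ) n := by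
    apply Int.finiteMultiplicity_iff.2
    exact ⟨by simpa using hp.ne_one, hn⟩
  obtain ⟨r, hr, hpr⟩ := hfin.exists_eq_pow_mul_and_not_dvd
  obtain ⟨k, hk⟩ := ht a
  have hc : IsCoprime r ((p : ℤ) ^ k) := by
    apply IsCoprime.pow_right
    exact ((Prime.coprime_iff_not_dvd (Nat.prime_iff_prime_int.mp hp)).2 hpr).symm
  obtain ⟨u, v, huv⟩ := hc
  have hk' : ((p : ℤ) ^ k) • a = 0 := by
    have := hk
    rw [← natCast_zsmul] at this
    exact_mod_cast this
  obtain ⟨b, hb⟩ := hdiv (multiplicity (p : ℤ) n) (u • a)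
  refine ⟨b, ?_⟩
  have hb' : ((p : ℤ) ^ (multiplicity (p : ℤ) n)) • b = u • a := by
    rw [hb, ← natCast_zsmul]; push_cast; rfl
  conv_lhs => rw [hr]
  rw [mul_comm, mul_smul, hb', ← mul_smul]
  calc (r * u) • a = (r * u) • a + v • ((p : ℤ) ^ k • a) := by rw [hk']; simp
    _ = (1 : ℤ) • a := by rw [← huv, add_smul, mul_smul v, mul_comm r u]
    _ = a := one_smul _ _

theorem prufer_tors (p : ℕ) (a : pruferSubgroup p) : ∃ k : ℕ, p ^ k • a = 0 := by
  obtain ⟨k, hk⟩ := a.2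
  exact ⟨k, Subtype.ext hk⟩

theorem prufer_pdiv {p : ℕ} (hp : p.Prime) (a : pruferSubgroup p) :
    ∃ b : pruferSubgroup p, a = p • b := by
  obtain ⟨⟨q⟩, k, hk⟩ := a
  change (p ^ k) • ((q : ℚ) : RatCircle) = 0 at hk
  have h1 : p • ((q / p : ℚ) : RatCircle) = ((q : ℚ) : RatCircle) := by
    rw [← QuotientAddGroup.mk_nsmul]
    congr 1
    rw [nsmul_eq_mul]
    have := hp.ne_zero
    field_simp
  refine ⟨⟨((q / p : ℚ) : RatCircle), k + 1, ?_⟩, ?_⟩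
  · rw [pow_succ, mul_smul, h1, hk]
  · exact Subtype.ext h1.symm

theorem prufer_nontriv {p : ℕ} (hp : p.Prime) : ∃ a : pruferSubgroup p, a ≠ 0 := by
  have hp0 : (p : ℚ) ≠ 0 := by exact_mod_cast hp.ne_zero
  refine ⟨⟨((1 / p : ℚ) : RatCircle), 1, ?_⟩, ?_⟩
  · rw [pow_one, ← QuotientAddGroup.mk_nsmul, QuotientAddGroup.eq_zero_iff]
    refine ⟨1, ?_⟩
    simp only [one_smul, nsmul_eq_mul]
    field_simp
  · intro h
    have h1 : ((1 / p : ℚ) : RatCircle) = 0 := congrArg Subtype.val h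
    rw [QuotientAddGroup.eq_zero_iff] at h1
    obtain ⟨n, hn⟩ := h1
    simp only [zsmul_eq_mul, mul_one] at hn
    have h2 : (n : ℚ) * p = 1 := by rw [hn]; field_simp
    have h3 : n * (p : ℤ) = 1 := by exact_mod_cast h2
    have h4 : (p : ℤ) ∣ 1 := ⟨n, by rw [mul_comm, h3]⟩
    have h5 : p ∣ 1 := by exact_mod_cast h4
    exact hp.one_lt.ne' (Nat.dvd_one.1 h5)

theorem prufer_cyc_aux {p : ℕ} (hp : p.Prime) (k : ℕ) (x : RatCircle) (hx : p ^ k • x = 0) :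
    ∃ m : ℤ, x = m • ((1 / (p : ℚ) ^ k : ℚ) : RatCircle) := by
  obtain ⟨q⟩ := x
  change p ^ k • ((q : ℚ) : RatCircle) = 0 at hx
  rw [← QuotientAddGroup.mk_nsmul, QuotientAddGroup.eq_zero_iff] at hx
  obtain ⟨m, hm⟩ := hx
  have hp0 : (p : ℚ) ≠ 0 := by exact_mod_cast hp.ne_zero
  refine ⟨m, ?_⟩
  change ((q : ℚ) : RatCircle) = _
  rw [← QuotientAddGroup.mk_zsmul]
  congr 1
  simp only [zsmul_eq_mul, mul_one, nsmul_eq_mul] at hm ⊢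
  rw [hm]
  push_cast
  field_simp

theorem prufer_uni {p : ℕ} (hp : p.Prime) : Uni p (pruferSubgroup p) := by
  refine ⟨prufer_tors p, ?_⟩
  intro a b
  obtain ⟨i, hi⟩ := prufer_tors p a
  obtain ⟨j, hj⟩ := prufer_tors p b
  have ha : p ^ (i + j) • (a : RatCircle) = 0 := by
    rw [← AddSubgroup.coe_nsmul, pow_add, mul_comm, mul_smul, hi, smul_zero]; rfl
  have hb : p ^ (i + j) • (b : RatCircle) = 0 := by
    rw [← AddSubgroup.coe_nsmul, pow_add, mul_smul, hj, smul_zero]; rfl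
  obtain ⟨m, hm⟩ := prufer_cyc_aux hp _ _ ha
  obtain ⟨l, hl⟩ := prufer_cyc_aux hp _ _ hb
  have hp0 : (p : ℚ) ≠ 0 := by exact_mod_cast hp.ne_zero
  have hz : ((p : ℤ) ^ (i + j)) • ((1 / (p : ℚ) ^ (i + j) : ℚ) : RatCircle) = 0 := by
    rw [← QuotientAddGroup.mk_zsmul, QuotientAddGroup.eq_zero_iff]
    refine ⟨1, ?_⟩
    simp only [one_smul, zsmul_eq_mul]
    push_cast
    field_simp
  have key : ∀ m l : ℤ, Int.gcd m ((p : ℤ) ^ (i + j)) ∣ Int.gcd l ((p : ℤ) ^ (i + j)) →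
      ∃ n : ℤ, l • ((1 / (p : ℚ) ^ (i + j) : ℚ) : RatCircle) =
        n • (m • ((1 / (p : ℚ) ^ (i + j) : ℚ) : RatCircle)) := by
    intro m l h
    have h1 : (Int.gcd m ((p : ℤ) ^ (i + j)) : ℤ) ∣ l :=
      (Int.natCast_dvd_natCast.2 h).trans (Int.gcd_dvd_left _ _)
    obtain ⟨c, hc⟩ := h1
    rw [Int.gcd_eq_gcd_ab] at hc
    refine ⟨c * Int.gcdA m ((p : ℤ) ^ (i + j)), ?_⟩
    conv_lhs => rw [hc]
    rw [add_mul, add_smul, mul_assoc ((p : ℤ) ^ (i + j)), mul_comm ((p : ℤ) ^ (i + j)),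
      mul_smul _ ((p : ℤ) ^ (i + j)), hz, smul_zero, add_zero, ← mul_smul]
    congr 1
    ring
  have hgm : Int.gcd m ((p : ℤ) ^ (i + j)) ∣ p ^ (i + j) := by
    have := Int.gcd_dvd_right m ((p : ℤ) ^ (i + j))
    exact_mod_cast this
  have hgl : Int.gcd l ((p : ℤ) ^ (i + j)) ∣ p ^ (i + j) := by
    have := Int.gcd_dvd_right l ((p : ℤ) ^ (i + j))
    exact_mod_cast this
  obtain ⟨s, _, hs⟩ := (Nat.dvd_prime_pow hp).1 hgm
  obtain ⟨t, _, ht⟩ := (Nat.dvd_prime_pow hp).1 hgl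
  rcases le_total s t with hst | hst
  · right
    obtain ⟨n, hn⟩ := key m l (by rw [hs, ht]; exact pow_dvd_pow _ hst)
    refine ⟨n, Subtype.ext ?_⟩
    rw [AddSubgroup.coe_zsmul, hm, hl, hn]
  · left
    obtain ⟨n, hn⟩ := key l m (by rw [hs, ht]; exact pow_dvd_pow _ hst)
    refine ⟨n, Subtype.ext ?_⟩
    rw [AddSubgroup.coe_zsmul, hm, hl, hn]

theorem AMin.spectrum {S : Set ℕ} {A : Type} [AddCommGroup A] (h : AMin S A) :
    addSpectrum A ⊆ S := by
  rintro p ⟨hp, H, K, hK, ⟨e⟩⟩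
  have h1 : AMin S (Subgroup.toAddSubgroup' H) :=
    h.of_inj (AddSubgroup.subtype _) (AddSubgroup.subtype_injective _)
  let f : (Subgroup.toAddSubgroup' H) →+ pruferSubgroup p :=
    { toFun := fun x => Multiplicative.toAdd (e (QuotientGroup.mk (⟨Multiplicative.ofAdd x.1, x.2⟩ : H)))
      map_zero' := by
        have : e (1 : H ⧸ K) = 1 := map_one e
        exact this
      map_add' := fun x y => by
        have := map_mul e (QuotientGroup.mk (⟨Multiplicative.ofAdd x.1, x.2⟩ : H))
          (QuotientGroup.mk (⟨Multiplicative.ofAdd y.1, y.2⟩ : H))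
        exact this }
  refine h1.mem_of_div hp f ?_ (prufer_tors p) (prufer_pdiv hp) (prufer_nontriv hp)
  intro y
  obtain ⟨x, hx⟩ := e.surjective (Multiplicative.ofAdd y)
  obtain ⟨x, rfl⟩ := QuotientGroup.mk_surjective x
  refine ⟨⟨Multiplicative.toAdd x.1, x.2⟩, ?_⟩
  exact congrArg Multiplicative.toAdd hx

theorem AMin.of_rel {S : Set ℕ} {A : Type} [AddCommGroup A] (B C : AddSubgroup A)
    (hB : AMin S B)
    (h : (∃ x ∈ C, ∀ a ∈ C, ∃ n : ℤ, a - n • x ∈ B) ∨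
      ∃ p ∈ S, p.Prime ∧ (∀ a ∈ C, ∃ k : ℕ, p ^ k • a ∈ B) ∧
        ∀ a ∈ C, ∀ b ∈ C, (∃ n : ℤ, a - n • b ∈ B) ∨ ∃ n : ℤ, b - n • a ∈ B) : AMin S C := by
  refine AMin.ext C (B.addSubgroupOf C) (hB.of_inj
    ((C.subtype.comp (AddSubgroup.subtype _)).codRestrict B (fun x => x.2)) ?_) ?_
  · intro x y hxy
    have h3 : ((x : C) : A) = ((y : C) : A) := congrArg (fun z : B => (z : A)) hxy
    exact Subtype.ext (Subtype.ext h3)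
  · rcases h with ⟨x, hx, h⟩ | ⟨p, hp, hp', h1, h2⟩
    · left
      refine ⟨QuotientAddGroup.mk ⟨x, hx⟩, fun a => ?_⟩
      induction a using QuotientAddGroup.induction_on with
      | H a =>
        obtain ⟨n, hn⟩ := h a a.2
        refine ⟨n, ?_⟩
        rw [← sub_eq_zero, ← QuotientAddGroup.mk_zsmul, ← QuotientAddGroup.mk_sub,
          QuotientAddGroup.eq_zero_iff]
        exact hn
    · right
      refine ⟨p, hp, hp', fun a => ?_, fun a b => ?_⟩
      · induction a using QuotientAddGroup.induction_on with
        | H a =>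
          obtain ⟨k, hk⟩ := h1 a a.2
          refine ⟨k, ?_⟩
          rw [← QuotientAddGroup.mk_nsmul, QuotientAddGroup.eq_zero_iff]
          exact hk
      · induction a using QuotientAddGroup.induction_on with
        | H a =>
        induction b using QuotientAddGroup.induction_on with
        | H b =>
          rcases h2 a a.2 b b.2 with ⟨n, hn⟩ | ⟨n, hn⟩
          · left
            refine ⟨n, ?_⟩
            rw [← sub_eq_zero, ← QuotientAddGroup.mk_zsmul, ← QuotientAddGroup.mk_sub,
              QuotientAddGroup.eq_zero_iff]
            exact hn
          · right
            refine ⟨n, ?_⟩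
            rw [← sub_eq_zero, ← QuotientAddGroup.mk_zsmul, ← QuotientAddGroup.mk_sub,
              QuotientAddGroup.eq_zero_iff]
            exact hn

/-- All abelian sections are in `AMin S`. -/
def AbSecs (S : Set ℕ) (G : Type) [Group G] : Prop :=
  ∀ (H : Subgroup G) (A : Type) [AddCommGroup A] (f : H →* Multiplicative A),
    Function.Surjective f → AMin S A

/-- auxiliary subgroup -/
def secSub {G : Type} [Group G] (H : Subgroup G) {A : Type} [AddCommGroup A]
    (f : H →* Multiplicative A) (c : Subgroup G) : AddSubgroup A :=
  Subgroup.toAddSubgroup' ((c.subgroupOf H).map f)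

theorem mem_secSub {G : Type} [Group G] {H : Subgroup G} {A : Type} [AddCommGroup A]
    {f : H →* Multiplicative A} {c : Subgroup G} {a : A} :
    a ∈ secSub H f c ↔ ∃ h : H, (h : G) ∈ c ∧ f h = Multiplicative.ofAdd a := Iff.rfl

theorem IsMinimax.abSecs {G : Type} [Group G] (h : IsMinimax G) : AbSecs (groupSpectrum G) G := by
  intro H A _ f hf
  obtain ⟨r, c, hmono, h0, hlast, hc⟩ := h
  suffices hs : ∀ i, AMin (groupSpectrum G) (secSub H f (c i)) by
    refine (hs (Fin.last r)).of_surj (AddSubgroup.subtype _) ?_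
    intro a
    obtain ⟨h, hh⟩ := hf (Multiplicative.ofAdd a)
    exact ⟨⟨a, mem_secSub.2 ⟨h, by rw [hlast]; trivial, hh⟩⟩, rfl⟩
  intro i
  induction i using Fin.induction with
  | zero =>
    refine AMin.triv _ ⟨?_⟩
    have : ∀ x : secSub H f (c 0), x = 0 := by
      rintro ⟨x, hx⟩
      obtain ⟨h, hh, hx⟩ := mem_secSub.1 hx
      rw [h0, Subgroup.mem_bot] at hh
      have : h = 1 := Subtype.ext hh
      rw [this, map_one] at hx
      exact Subtype.ext (Multiplicative.ofAdd.injective hx.symm)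
    intro x y
    rw [this x, this y]
  | succ i ih =>
    refine AMin.of_rel _ _ ih ?_
    obtain ⟨hN, hi⟩ := hc i
    have hsub : ∀ (a b : G), a ∈ c i.succ → b ∈ c i.succ → (hb : b ∈ c i.succ) → True := by
      intros; trivial
    set Q := (c i.succ) ⧸ (c i.castSucc).subgroupOf (c i.succ) with hQ
    have hrel : ∀ (x y : H) (hx : (x : G) ∈ c i.succ) (hy : (y : G) ∈ c i.succ) (n : ℤ) (a b : A),
        f x = Multiplicative.ofAdd a → f y = Multiplicative.ofAdd b →
        (QuotientGroup.mk (⟨x, hx⟩ : c i.succ) : Q) = (QuotientGroup.mk (⟨y, hy⟩ : c i.succ) : Q) ^ n →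
        a - n • b ∈ secSub H f (c i.castSucc) := by
      intro x y hx hy n a b hxa hyb he
      refine mem_secSub.2 ⟨(y ^ n)⁻¹ * x, ?_, ?_⟩
      · rw [← QuotientGroup.mk_zpow, eq_comm, QuotientGroup.eq] at he
        exact he
      · rw [map_mul, map_inv, map_zpow, hxa, hyb, ← ofAdd_zsmul, ← ofAdd_neg, ← ofAdd_add,
          neg_add_eq_sub]
    rcases hi with hcyc | ⟨p, hp, ⟨e⟩⟩
    · left
      let K : Subgroup Q := (((c i.succ).subgroupOf H).map H.subtype).subgroupOf (c i.succ) |>.map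
        (QuotientGroup.mk' _)
      have : IsCyclic K := inferInstance
      obtain ⟨⟨g, hg⟩, hgen⟩ := this
      obtain ⟨g', hg', rfl⟩ := hg
      obtain ⟨y, hy, hyg⟩ := hg'
      have hy' : (y : G) ∈ c i.succ := hy
      refine ⟨Multiplicative.toAdd (f y), mem_secSub.2 ⟨y, hy, rfl⟩, fun a ha => ?_⟩
      obtain ⟨x, hx, hxa⟩ := mem_secSub.1 ha
      obtain ⟨n, hn⟩ := hgen ⟨QuotientGroup.mk (⟨x, hx⟩ : c i.succ), ⟨⟨x, hx⟩, ⟨x, hx, rfl⟩, rfl⟩⟩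
      refine ⟨n, hrel x y hx hy n _ _ hxa rfl ?_⟩
      have hn' := congrArg Subtype.val hn
      have hg2 : g' = ⟨y, hy'⟩ := Subtype.ext hyg.symm
      subst hg2
      exact hn'.symm
    · right
      have hU := prufer_uni hp
      refine ⟨p, ⟨hp, c i.succ, _, hN, ⟨e⟩⟩, hp, fun a ha => ?_, fun a ha b hb => ?_⟩
      · obtain ⟨x, hx, hxa⟩ := mem_secSub.1 ha
        obtain ⟨k, hk⟩ := hU.1 (Multiplicative.toAdd (e (QuotientGroup.mk (⟨x, hx⟩ : c i.succ))))
        refine ⟨k, mem_secSub.2 ⟨x ^ (p ^ k), ?_, ?_⟩⟩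
        · have h1 : e (QuotientGroup.mk (⟨x, hx⟩ : c i.succ)) ^ (p ^ k) = 1 := hk
          rw [← map_pow, ← map_one e] at h1
          have h2 := e.injective h1
          rw [← QuotientGroup.mk_pow, QuotientGroup.eq_one_iff] at h2
          exact h2
        · rw [map_pow, hxa]; rfl
      · obtain ⟨x, hx, hxa⟩ := mem_secSub.1 ha
        obtain ⟨y, hy, hyb⟩ := mem_secSub.1 hb
        rcases hU.2 (Multiplicative.toAdd (e (QuotientGroup.mk (⟨x, hx⟩ : c i.succ))))
          (Multiplicative.toAdd (e (QuotientGroup.mk (⟨y, hy⟩ : c i.succ)))) with ⟨n, hn⟩ | ⟨n, hn⟩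
        · left
          refine ⟨n, hrel x y hx hy n _ _ hxa hyb (e.injective ?_)⟩
          rw [map_zpow]
          exact hn
        · right
          refine ⟨n, hrel y x hy hx n _ _ hyb hxa (e.injective ?_)⟩
          rw [map_zpow]
          exact hn

open TensorProduct in
theorem tensor_cyc {S : Set ℕ} {A B : Type} [AddCommGroup A] [AddCommGroup B] (h : Cyc A)
    (hB : AMin S B) : AMin S (A ⊗[ℤ] B) := by
  obtain ⟨x, hx⟩ := h
  refine hB.of_surj (TensorProduct.mk ℤ A B x).toAddMonoidHom ?_
  intro t
  induction t with
  | zero => exact ⟨0, map_zero _⟩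
  | add s t hs ht =>
    obtain ⟨s, rfl⟩ := hs
    obtain ⟨t, rfl⟩ := ht
    exact ⟨s + t, map_add _ _ _⟩
  | tmul a b =>
    obtain ⟨n, rfl⟩ := hx a
    exact ⟨n • b, by simp [TensorProduct.smul_tmul]⟩

open TensorProduct in
theorem tensor_uni {S : Set ℕ} {p q : ℕ} (hpS : q ∈ S) (hp : p.Prime) (hq : q.Prime) {A B : Type}
    [AddCommGroup A] [AddCommGroup B] (h : Uni p A)
    (hB : Uni q B) : AMin S (A ⊗[ℤ] B) := by
  have hBF : Fac S B := Or.inr ⟨q, hpS, hq, hB⟩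
  rcases h.dich hp with h1 | h1
  · exact tensor_cyc h1.1 hBF.amin
  · refine AMin.triv _ ⟨?_⟩
    have : ∀ t : A ⊗[ℤ] B, t = 0 := by
      intro t
      induction t with
      | zero => rfl
      | add s t hs ht => rw [hs, ht, add_zero]
      | tmul a b =>
        obtain ⟨k, hk⟩ := hB.1 b
        obtain ⟨a', rfl⟩ := div_of_pdiv hp h.1 h1 ((q : ℤ) ^ k)
          (pow_ne_zero _ (by exact_mod_cast hq.ne_zero)) a
        rw [TensorProduct.smul_tmul]
        have hk' : ((q : ℤ) ^ k) • b = 0 := by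
          have := hk
          rw [← natCast_zsmul] at this
          exact_mod_cast this
        rw [hk', TensorProduct.tmul_zero]
    intro x y
    rw [this x, this y]

open TensorProduct in
theorem tensor_ext {S : Set ℕ} {A B : Type} [AddCommGroup A] [AddCommGroup B] (A0 : AddSubgroup A)
    (h0 : AMin S (A0 ⊗[ℤ] B)) (h1 : AMin S ((A ⧸ A0) ⊗[ℤ] B)) : AMin S (A ⊗[ℤ] B) := by
  let g : A →ₗ[ℤ] (A ⧸ A0) := (QuotientAddGroup.mk' A0).toIntLinearMap
  let f : A0 →ₗ[ℤ] A := A0.subtype.toIntLinearMap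
  have hfg : Function.Exact f g := by
    intro y
    constructor
    · intro hy
      have : y ∈ A0 := (QuotientAddGroup.eq_zero_iff y).1 hy
      exact ⟨⟨y, this⟩, rfl⟩
    · rintro ⟨y, rfl⟩
      exact (QuotientAddGroup.eq_zero_iff _).2 y.2
  have hg : Function.Surjective g := QuotientAddGroup.mk'_surjective A0
  have hex := rTensor_exact B hfg hg
  refine h1.of_ker (g.rTensor B).toAddMonoidHom (h0.of_surj
    ((f.rTensor B).toAddMonoidHom.codRestrict _ ?_) ?_)
  · intro x
    exact (hex _).2 ⟨x, rfl⟩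
  · rintro ⟨y, hy⟩
    obtain ⟨x, hx⟩ := (hex y).1 hy
    exact ⟨x, Subtype.ext hx⟩

open TensorProduct in
theorem AMin.comm {S : Set ℕ} {A B : Type} [AddCommGroup A] [AddCommGroup B]
    (h : AMin S (A ⊗[ℤ] B)) : AMin S (B ⊗[ℤ] A) :=
  h.of_surj (TensorProduct.comm ℤ A B).toLinearMap.toAddMonoidHom
    (TensorProduct.comm ℤ A B).surjective

open TensorProduct in
theorem AMin.tensor {S : Set ℕ} {A : Type} [AddCommGroup A] (hA : AMin S A) :
    ∀ {B : Type} [AddCommGroup B], AMin S B → AMin S (A ⊗[ℤ] B) := by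
  induction hA with
  | triv A h =>
    intro B _ hB
    exact tensor_cyc ⟨0, fun a => ⟨0, Subsingleton.elim _ _⟩⟩ hB
  | ext A A0 _ hF ih =>
    intro B _ hB
    refine tensor_ext A0 (ih hB) ?_
    rcases hF with h | ⟨p, hp, hp', h⟩
    · exact tensor_cyc h hB
    · apply AMin.comm
      induction hB with
      | triv B h' => exact tensor_cyc ⟨0, fun a => ⟨0, Subsingleton.elim _ _⟩⟩ (Fac.amin (Or.inr ⟨p, hp, hp', h⟩))
      | ext B B0 _ hF' ih' =>
        refine tensor_ext B0 ih' ?_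
        rcases hF' with h' | ⟨q, hq, hq', h'⟩
        · exact tensor_cyc h' (Fac.amin (Or.inr ⟨p, hp, hp', h⟩))
        · exact tensor_uni hp hq' hp' h' h

theorem finite_weights {K M ι : Type} [Field K] [AddCommGroup M] [Module K M]
    [FiniteDimensional K M] (f : ι → Module.End K M) (h : ∀ i j, Commute (f i) (f j)) :
    {χ : ι → K | (⨅ i, (f i).eigenspace (χ i)) ≠ ⊥}.Finite := by
  have h1 := Module.End.independent_iInf_maxGenEigenspace_of_forall_mapsTo f
    (fun i j φ => Module.End.mapsTo_maxGenEigenspace_of_comm (h j i) φ)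
  have h2 : iSupIndep fun χ : ι → K => ⨅ i, (f i).eigenspace (χ i) := by
    refine h1.mono fun χ => ?_
    refine iInf_mono fun i => ?_
    exact (f i).genEigenspace (χ i) |>.monotone le_top
  exact WellFoundedGT.finite_ne_bot_of_iSupIndep h2

theorem exists_weight {K M ι : Type} [Field K] [IsAlgClosed K] [AddCommGroup M] [Module K M]
    [FiniteDimensional K M] [Nontrivial M] (f : ι → Module.End K M)
    (h : ∀ i j, Commute (f i) (f j)) :
    ∃ χ : ι → K, (⨅ i, (f i).eigenspace (χ i)) ≠ ⊥ := by
  let P : Set (Submodule K M) := {W | W ≠ ⊥ ∧ ∀ i, ∀ v ∈ W, f i v ∈ W}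
  have hP : P.Nonempty := ⟨⊤, top_ne_bot, fun _ _ _ => trivial⟩
  obtain ⟨W, ⟨hW0, hWinv⟩, hmin⟩ := WellFounded.has_min (wellFounded_lt (α := Submodule K M)) P hP
  have key : ∀ i, ∃ c : K, ∀ v ∈ W, f i v = c • v := by
    intro i
    have : Nontrivial W := Submodule.nontrivial_iff_ne_bot.2 hW0
    let fi : Module.End K W := (f i).restrict (hWinv i)
    obtain ⟨c, hc⟩ := Module.End.exists_eigenvalue fi
    refine ⟨c, ?_⟩
    obtain ⟨w, hw⟩ := hc.exists_hasEigenvector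
    have hle : W ⊓ (f i).eigenspace c ≤ W := inf_le_left
    have hmem : W ⊓ (f i).eigenspace c ∈ P := by
      refine ⟨?_, fun j v hv => ⟨hWinv j v hv.1, ?_⟩⟩
      · rw [Submodule.ne_bot_iff]
        refine ⟨w, ⟨w.2, ?_⟩, ?_⟩
        · rw [SetLike.mem_coe, Module.End.mem_eigenspace_iff]
          exact congrArg Subtype.val hw.apply_eq_smul
        · intro h0
          exact hw.2 (Subtype.ext h0)
      · have hv2 := hv.2
        rw [SetLike.mem_coe, Module.End.mem_eigenspace_iff] at hv2 ⊢
        have := congrArg (fun T : Module.End K M => T v) (h i j).eq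
        simp only [Module.End.mul_apply] at this
        rw [this, hv2, map_smul]
    have heq : W ⊓ (f i).eigenspace c = W := by
      by_contra hne
      exact hmin _ hmem (lt_of_le_of_ne hle hne)
    intro v hv
    rw [← heq] at hv
    exact Module.End.mem_eigenspace_iff.1 hv.2
  choose χ hχ using key
  refine ⟨χ, ?_⟩
  have : W ≤ ⨅ i, (f i).eigenspace (χ i) :=
    le_iInf fun i v hv => Module.End.mem_eigenspace_iff.2 (hχ i v hv)
  intro h0
  rw [h0, le_bot_iff] at this
  exact hW0 this

/-- No nontrivial proper subspace has a finite orbit. -/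
def StrIrr {K V Γ : Type} [Field K] [AddCommGroup V] [Module K V] [Group Γ]
    (ρ : Representation K Γ V) : Prop :=
  ∀ W : Submodule K V, (Set.range fun g => W.map (ρ g)).Finite → W = ⊥ ∨ W = ⊤

/-- scalar operators -/
def IsScal {K V : Type} [Field K] [AddCommGroup V] [Module K V] (T : V →ₗ[K] V) : Prop :=
  ∃ c : K, ∀ v, T v = c • v

theorem rep_inv_apply {K V Γ : Type} [Field K] [AddCommGroup V] [Module K V] [Group Γ]
    (ρ : Representation K Γ V) (g : Γ) (v : V) : ρ g (ρ g⁻¹ v) = v := by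
  rw [← Module.End.mul_apply, ← map_mul, mul_inv_cancel, map_one, Module.End.one_apply]

theorem scal_of_comm {K V Γ : Type} [Field K] [IsAlgClosed K] [AddCommGroup V] [Module K V]
    [FiniteDimensional K V] [Nontrivial V] [Group Γ] (ρ : Representation K Γ V) (h : StrIrr ρ)
    (Z : Subgroup Γ) [Z.Normal] (hZ : ∀ x ∈ Z, ∀ y ∈ Z, ρ x * ρ y = ρ y * ρ x) :
    ∀ z ∈ Z, IsScal (ρ z) := by
  let f : Z → Module.End K V := fun z => ρ z
  have hcomm : ∀ i j, Commute (f i) (f j) := fun i j => hZ i i.2 j j.2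
  obtain ⟨χ, hχ⟩ := exists_weight f hcomm
  have hfin := finite_weights f hcomm
  have hmem : ∀ (χ : Z → K) (v : V), v ∈ (⨅ i, (f i).eigenspace (χ i)) ↔
      ∀ z : Z, ρ z v = χ z • v := by
    intro χ v
    simp [Submodule.mem_iInf, Module.End.mem_eigenspace_iff, f]
  have hmap : ∀ g : Γ, (⨅ i, (f i).eigenspace (χ i)).map (ρ g) =
      ⨅ i, (f i).eigenspace (χ (MulAut.conjNormal g⁻¹ i)) := by
    intro g
    ext w
    rw [Submodule.mem_map, hmem (fun i => χ (MulAut.conjNormal g⁻¹ i))]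
    constructor
    · rintro ⟨v, hv, rfl⟩ z
      rw [hmem] at hv
      rw [← map_smul, ← hv, ← Module.End.mul_apply, ← Module.End.mul_apply, ← map_mul, ← map_mul]
      congr 2
      rw [MulAut.conjNormal_apply]
      group
    · intro hw
      refine ⟨ρ g⁻¹ w, ?_, rep_inv_apply ρ g w⟩
      rw [hmem]
      intro z
      have h1 := hw (MulAut.conjNormal g z)
      have h2 : MulAut.conjNormal g⁻¹ (MulAut.conjNormal g z) = z := by
        rw [← MulAut.mul_apply, ← map_mul, inv_mul_cancel, map_one, MulAut.one_apply]
      rw [h2] at h1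
      rw [← map_smul, ← h1, ← Module.End.mul_apply, ← Module.End.mul_apply, ← map_mul, ← map_mul]
      congr 2
      rw [MulAut.conjNormal_apply]
      group
  have hfinW : (Set.range fun g => (⨅ i, (f i).eigenspace (χ i)).map (ρ g)).Finite := by
    refine (hfin.image (fun χ : Z → K => ⨅ i, (f i).eigenspace (χ i))).subset ?_
    rintro _ ⟨g, rfl⟩
    refine ⟨_, ?_, (hmap g).symm⟩
    change _ ≠ ⊥
    rw [← hmap g]
    intro h0
    apply hχ
    rw [Submodule.eq_bot_iff]
    intro v hv0
    have hv : ρ g v = 0 := by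
      have := Submodule.mem_map_of_mem (f := ρ g) hv0
      rw [h0] at this
      simpa using this
    have := rep_inv_apply ρ g⁻¹ v
    rw [inv_inv, hv, map_zero] at this
    exact this.symm
  rcases h (⨅ i, (f i).eigenspace (χ i)) hfinW with h0 | h0
  · exact absurd h0 hχ
  · intro z hz
    refine ⟨χ ⟨z, hz⟩, fun v => ?_⟩
    have : v ∈ (⨅ i, (f i).eigenspace (χ i)) := by rw [h0]; trivial
    exact (hmem χ v).1 this ⟨z, hz⟩

theorem scal_step {K V Γ : Type} [Field K] [IsAlgClosed K] [AddCommGroup V] [Module K V]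
    [FiniteDimensional K V] [Nontrivial V] [Group Γ] (ρ : Representation K Γ V) (h : StrIrr ρ)
    (N : Subgroup Γ) [N.Normal] (hN : ∀ x ∈ N, ∀ y ∈ N, IsScal (ρ (x * y * x⁻¹ * y⁻¹))) :
    ∀ m ∈ N, IsScal (ρ m) := by
  -- conjugation operators on End V
  let f : N → Module.End K (Module.End K V) := fun x =>
    (LinearMap.mulLeft K (ρ x)) * (LinearMap.mulRight K (ρ (x : Γ)⁻¹))
  have hf : ∀ (x : N) (T : Module.End K V), f x T = ρ x * T * ρ (x : Γ)⁻¹ := by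
    intro x T
    simp [f, mul_assoc]
  have hsc : ∀ (g : Γ), IsScal (ρ g) → ∃ c : K, ρ g = c • 1 := by
    rintro g ⟨c, hc⟩
    exact ⟨c, LinearMap.ext fun v => by simp [hc]⟩
  have hρinv : ∀ g : Γ, ρ g * ρ g⁻¹ = 1 := fun g => by rw [← map_mul, mul_inv_cancel, map_one]
  have hρinv' : ∀ g : Γ, ρ g⁻¹ * ρ g = 1 := fun g => by rw [← map_mul, inv_mul_cancel, map_one]
  have hρne : ∀ g : Γ, ρ g ≠ 0 := by
    intro g h0
    have := hρinv g
    rw [h0, zero_mul] at this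
    exact zero_ne_one this
  -- characters
  have hchar : ∀ m ∈ N, ∀ x : N, ∃ c : K, f x (ρ m) = c • ρ m := by
    intro m hm x
    obtain ⟨c, hc⟩ := hsc _ (hN x x.2 m hm)
    refine ⟨c, ?_⟩
    rw [hf, ← map_mul, ← map_mul]
    have : (x : Γ) * m * (x : Γ)⁻¹ = ((x : Γ) * m * (x : Γ)⁻¹ * m⁻¹) * m := by group
    rw [this, map_mul, hc, smul_mul_assoc, one_mul]
  have hcomm : ∀ i j, Commute (f i) (f j) := by
    intro i j
    refine LinearMap.ext fun T => ?_
    change f i (f j T) = f j (f i T)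
    rw [hf, hf, hf, hf]
    obtain ⟨c, hc⟩ := hsc _ (hN i i.2 j j.2)
    have hc0 : c ≠ 0 := by
      rintro rfl
      rw [zero_smul] at hc
      exact hρne _ hc
    have e1 : ρ (i : Γ) * ρ (j : Γ) = c • (ρ (j : Γ) * ρ (i : Γ)) := by
      have : (i : Γ) * j = ((i : Γ) * j * (i : Γ)⁻¹ * (j : Γ)⁻¹) * (j * i) := by group
      rw [← map_mul, this, map_mul, hc, smul_mul_assoc, one_mul, map_mul]
    have e2 : ρ (i : Γ)⁻¹ * ρ (j : Γ)⁻¹ = c • (ρ (j : Γ)⁻¹ * ρ (i : Γ)⁻¹) := by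
      have h3 : (j : Γ)⁻¹ * (i : Γ)⁻¹ * ((i : Γ) * j * (i : Γ)⁻¹ * (j : Γ)⁻¹) =
        (i : Γ)⁻¹ * (j : Γ)⁻¹ := by group
      rw [← map_mul, ← h3, map_mul, hc, mul_smul_comm, mul_one, map_mul]
    have e2' : ρ (j : Γ)⁻¹ * ρ (i : Γ)⁻¹ = c⁻¹ • (ρ (i : Γ)⁻¹ * ρ (j : Γ)⁻¹) := by
      rw [e2, smul_smul, inv_mul_cancel₀ hc0, one_smul]
    calc ρ (i : Γ) * (ρ (j : Γ) * T * ρ (j : Γ)⁻¹) * ρ (i : Γ)⁻¹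
        = (ρ (i : Γ) * ρ (j : Γ)) * T * (ρ (j : Γ)⁻¹ * ρ (i : Γ)⁻¹) := by simp only [mul_assoc]
      _ = (ρ (j : Γ) * ρ (i : Γ)) * T * (ρ (i : Γ)⁻¹ * ρ (j : Γ)⁻¹) := by
        rw [e1, e2', smul_mul_assoc, smul_mul_assoc, mul_smul_comm, smul_smul,
          mul_inv_cancel₀ hc0, one_smul]
      _ = _ := by simp only [mul_assoc]
  have hfin := finite_weights f hcomm
  -- Z
  let Z : Subgroup Γ :=
    { carrier := {z | z ∈ N ∧ ∀ x ∈ N, ρ z * ρ x = ρ x * ρ z}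
      one_mem' := ⟨N.one_mem, fun x _ => by rw [map_one, one_mul, mul_one]⟩
      mul_mem' := by
        rintro a b ⟨ha, ha'⟩ ⟨hb, hb'⟩
        refine ⟨N.mul_mem ha hb, fun x hx => ?_⟩
        rw [map_mul, mul_assoc, hb' x hx, ← mul_assoc, ha' x hx, mul_assoc]
      inv_mem' := by
        rintro a ⟨ha, ha'⟩
        refine ⟨N.inv_mem ha, fun x hx => ?_⟩
        calc ρ a⁻¹ * ρ x = ρ a⁻¹ * (ρ x * ρ a) * ρ a⁻¹ := by
              rw [mul_assoc, mul_assoc, hρinv, mul_one]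
          _ = ρ x * ρ a⁻¹ := by rw [← ha' x hx, ← mul_assoc, hρinv', one_mul] }
  have hZn : Z.Normal := by
    refine ⟨?_⟩
    rintro z ⟨hz, hz'⟩ g
    refine ⟨Subgroup.Normal.conj_mem inferInstance z hz g, fun x hx => ?_⟩
    have := hz' (g⁻¹ * x * g) (by simpa using Subgroup.Normal.conj_mem inferInstance x hx g⁻¹)
    rw [← map_mul, ← map_mul] at this ⊢
    have h2 := congrArg (fun T => ρ g * T * ρ g⁻¹) this
    simp only [← map_mul] at h2
    convert h2 using 2 <;> group
  have hZs := scal_of_comm ρ h Z (fun x hx y hy => hx.2 y hy.1)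
  intro m hm
  have hconj : ∀ g : Γ, g * m * g⁻¹ ∈ N := fun g => Subgroup.Normal.conj_mem inferInstance m hm g
  -- the orbit of ρ m is finite
  have hO : (Set.range fun g : Γ => ρ (g * m * g⁻¹)).Finite := by
    have hsub : (Set.range fun g : Γ => ρ (g * m * g⁻¹)) ⊆
        ⋃ χ ∈ {χ : N → K | (⨅ i, (f i).eigenspace (χ i)) ≠ ⊥},
          {T | (∃ g : Γ, T = ρ (g * m * g⁻¹)) ∧ ∀ x, f x T = χ x • T} := by
      rintro _ ⟨g, rfl⟩
      choose χ hχ using hchar _ (hconj g)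
      simp only [Set.mem_iUnion]
      refine ⟨χ, ?_, ⟨g, rfl⟩, hχ⟩
      refine (Submodule.ne_bot_iff _).2 ⟨ρ (g * m * g⁻¹), ?_, hρne _⟩
      simp only [Submodule.mem_iInf, Module.End.mem_eigenspace_iff]
      exact hχ
    refine (hfin.biUnion fun χ _ => ?_).subset hsub
    by_cases hne : ∃ T0 : Module.End K V, (∃ g : Γ, T0 = ρ (g * m * g⁻¹)) ∧ ∀ x, f x T0 = χ x • T0
    · obtain ⟨T0, ⟨g0, hg0⟩, hT0⟩ := hne
      have hroots : {s : K | s ^ (Module.finrank K V) = 1}.Finite := by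
        have := (Polynomial.nthRootsFinset (Module.finrank K V) (1 : K)).finite_toSet
        refine this.subset fun s hs => ?_
        rw [Finset.mem_coe, Polynomial.mem_nthRootsFinset Module.finrank_pos]
        exact hs
      refine (hroots.image (fun s : K => s • T0)).subset ?_
      rintro T ⟨⟨g, hg⟩, hT⟩
      have hz : (g0 * m * g0⁻¹)⁻¹ * (g * m * g⁻¹) ∈ Z := by
        refine ⟨N.mul_mem (N.inv_mem (hconj g0)) (hconj g), fun x hx => ?_⟩
        have a1 := hT0 ⟨x, hx⟩
        have a2 := hT ⟨x, hx⟩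
        rw [hf] at a1 a2
        simp only at a1 a2
        have b1 : ρ x * T0 = χ ⟨x, hx⟩ • (T0 * ρ x) := by
          rw [← smul_mul_assoc, ← a1, mul_assoc, hρinv', mul_one]
        have b2 : ρ x * T = χ ⟨x, hx⟩ • (T * ρ x) := by
          rw [← smul_mul_assoc, ← a2, mul_assoc, hρinv', mul_one]
        have hc0 : χ ⟨x, hx⟩ ≠ 0 := by
          intro h0
          rw [h0, zero_smul, hg0, ← map_mul] at b1
          exact hρne _ b1
        have hT0i : ρ (g0 * m * g0⁻¹)⁻¹ * T0 = 1 := by rw [hg0, hρinv']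
        have hT0i' : T0 * ρ (g0 * m * g0⁻¹)⁻¹ = 1 := by rw [hg0, hρinv]
        rw [map_mul, ← hg]
        set U := ρ (g0 * m * g0⁻¹)⁻¹ with hU
        have b3 : U * ρ x = (χ ⟨x, hx⟩) • (ρ x * U) := by
          calc U * ρ x = U * (ρ x * T0) * U := by rw [mul_assoc, mul_assoc, hT0i', mul_one]
            _ = _ := by rw [b1, mul_smul_comm, smul_mul_assoc, ← mul_assoc, hT0i, one_mul]
        have b4 : T * ρ x = (χ ⟨x, hx⟩)⁻¹ • (ρ x * T) := by
          rw [b2, smul_smul, inv_mul_cancel₀ hc0, one_smul]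
        rw [mul_assoc, b4, mul_smul_comm, ← mul_assoc, b3, smul_mul_assoc, smul_smul,
          inv_mul_cancel₀ hc0, one_smul, mul_assoc]
      obtain ⟨s, hs⟩ := hsc _ (hZs _ hz)
      have hTs : T = s • T0 := by
        rw [map_mul, ← hg] at hs
        calc T = T0 * (ρ (g0 * m * g0⁻¹)⁻¹ * T) := by
              rw [← mul_assoc, hg0, hρinv, one_mul]
          _ = s • T0 := by rw [hs, mul_smul_comm, mul_one]
      refine ⟨s, ?_, hTs.symm⟩
      have hdet : ∀ g : Γ, LinearMap.det (ρ (g * m * g⁻¹)) = LinearMap.det (ρ m) := by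
        intro g
        rw [map_mul, map_mul, map_mul, map_mul, mul_right_comm, ← map_mul, hρinv, map_one, one_mul]
      have hdet0 : LinearMap.det (ρ m) ≠ 0 := by
        intro h0
        have := congrArg LinearMap.det (hρinv m)
        rw [map_mul, h0, zero_mul, map_one] at this
        exact zero_ne_one this
      have h5 := congrArg LinearMap.det hTs
      rw [LinearMap.det_smul, hg, hg0, hdet, hdet] at h5
      change s ^ _ = 1
      exact mul_right_cancel₀ hdet0 (by rw [← h5, one_mul])
    · convert Set.finite_empty
      ext T
      simp only [Set.mem_ofPred_eq, Set.mem_empty_iff_false, iff_false]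
      intro h
      exact hne ⟨T, h⟩
  obtain ⟨c, hc⟩ := Module.End.exists_eigenvalue (ρ m)
  have hfinW : (Set.range fun g => (Module.End.eigenspace (ρ m) c).map (ρ g)).Finite := by
    refine (hO.image (fun T => Module.End.eigenspace T c)).subset ?_
    rintro _ ⟨g, rfl⟩
    refine ⟨_, ⟨g, rfl⟩, ?_⟩
    ext w
    simp only
    rw [Submodule.mem_map, Module.End.mem_eigenspace_iff]
    constructor
    · intro hw
      refine ⟨ρ g⁻¹ w, ?_, rep_inv_apply ρ g w⟩
      rw [Module.End.mem_eigenspace_iff, ← map_smul, ← hw, ← Module.End.mul_apply,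
        ← Module.End.mul_apply, ← map_mul, ← map_mul]
      congr 2
      group
    · rintro ⟨v, hv, rfl⟩
      rw [Module.End.mem_eigenspace_iff] at hv
      rw [← map_smul, ← hv, ← Module.End.mul_apply,
        ← Module.End.mul_apply, ← map_mul, ← map_mul]
      congr 2
      group
  rcases h (Module.End.eigenspace (ρ m) c) hfinW with h0 | h0
  · exact absurd h0 hc
  · refine ⟨c, fun v => ?_⟩
    have : v ∈ Module.End.eigenspace (ρ m) c := by rw [h0]; trivial
    exact Module.End.mem_eigenspace_iff.1 this

theorem scal_of_solvable {K V Γ : Type} [Field K] [IsAlgClosed K] [AddCommGroup V] [Module K V]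
    [FiniteDimensional K V] [Nontrivial V] [Group Γ] [hs : Group.IsSolvable Γ]
    (ρ : Representation K Γ V) (h : StrIrr ρ) (g : Γ) : IsScal (ρ g) := by
  obtain ⟨n, hn⟩ := hs.solvable
  have key : ∀ k ≤ n, ∀ m ∈ derivedSeries Γ (n - k), IsScal (ρ m) := by
    intro k
    induction k with
    | zero =>
      intro _ m hm
      rw [Nat.sub_zero, hn, Subgroup.mem_bot] at hm
      exact ⟨1, fun v => by rw [hm, map_one, one_smul]; rfl⟩
    | succ k ih =>
      intro hk
      refine scal_step ρ h _ fun x hx y hy => ih (by omega) _ ?_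
      have : n - k = (n - (k + 1)) + 1 := by omega
      rw [this, derivedSeries_succ]
      exact Subgroup.commutator_mem_commutator hx hy
  exact key n le_rfl g (by simp)

/-- iterated application of `g - 1` -/
def kill {Γ A : Type} [AddCommGroup A] (α : Γ → A → A) (l : List Γ) (a : A) : A :=
  l.foldr (fun g x => α g x - x) a

/-- the subset `N` acts nilpotently with class `n` -/
def NilAct {Γ A : Type} [Group Γ] [AddCommGroup A] (α : Γ → A → A) (N : Subgroup Γ) (n : ℕ) :
    Prop :=
  ∀ l : List Γ, l.length = n → (∀ g ∈ l, g ∈ N) → ∀ a, kill α l a = 0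

/-- virtually triangular action -/
def VNil {Γ A : Type} [Group Γ] [AddCommGroup A] (α : Γ → A → A) : Prop :=
  ∃ H : Subgroup Γ, H.index ≠ 0 ∧ ∃ n, NilAct α ⁅H, H⁆ n

theorem kill_append {Γ A : Type} [AddCommGroup A] (α : Γ → A → A) (l m : List Γ) (a : A) :
    kill α (l ++ m) a = kill α l (kill α m a) := by
  simp [kill]

theorem kill_map {Γ A B : Type} [AddCommGroup A] [AddCommGroup B] (α : Γ → A → A) (β : Γ → B → B)
    (f : A →+ B) (l : List Γ) (h : ∀ g ∈ l, ∀ a, f (α g a) = β g (f a)) (a : A) :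
    f (kill α l a) = kill β l (f a) := by
  induction l with
  | nil => rfl
  | cons g l ih =>
    have := ih fun g hg => h g (List.mem_cons_of_mem _ hg)
    simp only [kill, List.foldr_cons, map_sub] at this ⊢
    rw [h g (List.mem_cons_self), this]

theorem kill_zero {Γ A : Type} [AddCommGroup A] (α : Γ → A → A) (h0 : ∀ g, α g 0 = 0)
    (l : List Γ) : kill α l 0 = 0 := by
  induction l with
  | nil => rfl
  | cons g l ih =>
    simp only [kill, List.foldr_cons] at ih ⊢
    rw [ih, h0, sub_zero]

theorem NilAct.mono {Γ A : Type} [Group Γ] [AddCommGroup A] {α : Γ → A → A} (h0 : ∀ g, α g 0 = 0)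
    {N M : Subgroup Γ} {n m : ℕ} (h : NilAct α N n) (hM : M ≤ N) (hn : n ≤ m) : NilAct α M m := by
  intro l hl hg a
  rw [← List.take_append_drop (m - n) l, kill_append, h (l.drop (m - n)), kill_zero _ h0]
  · rw [List.length_drop]; omega
  · intro g hgl
    exact hM (hg g (List.mem_of_mem_drop hgl))

theorem NilAct.ext {Γ A B C : Type} [Group Γ] [AddCommGroup A] [AddCommGroup B] [AddCommGroup C]
    {α : Γ → A → A} {β : Γ → B → B} {γ : Γ → C → C} {N : Subgroup Γ} {n m : ℕ}
    (hB : NilAct β N n) (hC : NilAct γ N m) (i : B →+ A) (q : A →+ C)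
    (hi : ∀ g b, i (β g b) = α g (i b)) (hq : ∀ g a, q (α g a) = γ g (q a))
    (hex : ∀ a, q a = 0 → ∃ b, i b = a) : NilAct α N (n + m) := by
  intro l hl hg a
  rw [← List.take_append_drop n l, kill_append]
  obtain ⟨b, hb⟩ := hex (kill α (l.drop n) a) (by
    rw [kill_map α γ q _ (fun g _ a => hq g a), hC]
    · rw [List.length_drop]; omega
    · intro g hgl
      exact hg g (List.mem_of_mem_drop hgl))
  rw [← hb, ← kill_map β α i _ (fun g _ a => hi g a), hB, map_zero]
  · rw [List.length_take]; omega
  · intro g hgl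
    exact hg g (List.mem_of_mem_take hgl)

theorem VNil.ext {Γ A B C : Type} [Group Γ] [AddCommGroup A] [AddCommGroup B] [AddCommGroup C]
    {α : Γ → A → A} {β : Γ → B → B} {γ : Γ → C → C}
    (hB0 : ∀ g, β g 0 = 0) (hC0 : ∀ g, γ g 0 = 0)
    (hB : VNil β) (hC : VNil γ) (i : B →+ A) (q : A →+ C)
    (hi : ∀ g b, i (β g b) = α g (i b)) (hq : ∀ g a, q (α g a) = γ g (q a))
    (hex : ∀ a, q a = 0 → ∃ b, i b = a) : VNil α := by
  obtain ⟨H, hH, n, h1⟩ := hB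
  obtain ⟨K, hK, m, h2⟩ := hC
  refine ⟨H ⊓ K, Subgroup.index_inf_ne_zero hH hK, n + m, ?_⟩
  exact NilAct.ext (h1.mono hB0 (Subgroup.commutator_mono inf_le_left inf_le_left) le_rfl)
    (h2.mono hC0 (Subgroup.commutator_mono inf_le_right inf_le_right) le_rfl) i q hi hq hex

theorem VNil.of_subgroup {Γ A : Type} [Group Γ] [AddCommGroup A] {α : Γ → A → A}
    (Γ1 : Subgroup Γ) (h1 : Γ1.index ≠ 0) (h : VNil (fun g : Γ1 => α g)) : VNil α := by
  obtain ⟨H, hH, n, hn⟩ := h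
  refine ⟨H.map Γ1.subtype, ?_, n, ?_⟩
  · rw [Subgroup.index_map_subtype]
    exact mul_ne_zero hH h1
  · intro l hl hg a
    rw [← Subgroup.map_commutator] at hg
    have : ∃ l' : List Γ1, l'.map Γ1.subtype = l ∧ ∀ g ∈ l', g ∈ ⁅H, H⁆ := by
      clear hl
      induction l with
      | nil => exact ⟨[], rfl, by simp⟩
      | cons g l ih =>
        obtain ⟨l', hl', hm⟩ := ih fun g hgl => hg g (List.mem_cons_of_mem _ hgl)
        obtain ⟨g', hg', rfl⟩ := hg g List.mem_cons_self
        refine ⟨g' :: l', by rw [List.map_cons, hl'], ?_⟩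
        intro x hx
        rcases List.mem_cons.1 hx with rfl | hx
        · exact hg'
        · exact hm x hx
    obtain ⟨l', rfl, hm⟩ := this
    have := hn l' (by simpa using hl) hm a
    rw [← this]
    simp only [kill, List.foldr_map]
    rfl

theorem VNil.of_inj {Γ A B : Type} [Group Γ] [AddCommGroup A] [AddCommGroup B]
    {α : Γ → A → A} {β : Γ → B → B} (h : VNil β) (f : A →+ B) (hf : Function.Injective f)
    (he : ∀ g a, f (α g a) = β g (f a)) : VNil α := by
  obtain ⟨H, hH, n, h1⟩ := h
  refine ⟨H, hH, n, fun l hl hg a => hf ?_⟩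
  rw [kill_map α β f _ (fun g _ a => he g a), h1 l hl hg, map_zero]

theorem VNil.of_triv {Γ A : Type} [Group Γ] [AddCommGroup A] {α : Γ → A → A}
    (H : Subgroup Γ) (hH : H.index ≠ 0) (h : ∀ g ∈ ⁅H, H⁆, ∀ a, α g a = a) : VNil α := by
  refine ⟨H, hH, 1, fun l hl hg a => ?_⟩
  obtain ⟨g, rfl⟩ := List.length_eq_one_iff.1 hl
  simp [kill, h g (hg g (by simp))]

theorem VNil.of_finite {Γ A : Type} [Group Γ] [AddCommGroup A] [Finite A]
    (ρ : Representation ℤ Γ A) : VNil (fun g a => ρ g a) := by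
  let φ : Γ →* Equiv.Perm A := MulAction.toPermHom (Module.End ℤ A)ˣ A |>.comp ρ.toHomUnits
  refine VNil.of_triv φ.ker ?_ ?_
  · have : Finite φ.range := inferInstance
    rw [Subgroup.index_ker]
    exact Nat.card_pos.ne'
  · intro g hg a
    have h1 : g ∈ φ.ker := Subgroup.commutator_le_left _ _ hg
    have := congrArg (fun e : Equiv.Perm A => e a) (MonoidHom.mem_ker.1 h1)
    exact this

theorem stab_index {K V Γ : Type} [Field K] [AddCommGroup V] [Module K V] [Group Γ]
    (ρ : Representation K Γ V) (W : Submodule K V)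
    (h : (Set.range fun g => W.map (ρ g)).Finite) :
    ∃ H : Subgroup Γ, H.index ≠ 0 ∧ ∀ g ∈ H, ∀ w ∈ W, ρ g w ∈ W := by
  let _ : MulAction Γ (Submodule K V) :=
    { smul := fun g U => U.map (ρ g)
      one_smul := fun U => by
        change U.map (ρ 1) = U
        rw [map_one]; exact Submodule.map_id U
      mul_smul := fun g g' U => by
        change U.map (ρ (g * g')) = (U.map (ρ g')).map (ρ g)
        rw [map_mul, ← Submodule.map_comp]; rfl }
  refine ⟨MulAction.stabilizer Γ W, ?_, ?_⟩
  · rw [MulAction.index_stabilizer]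
    have hfin : (MulAction.orbit Γ W).Finite := h
    have := hfin.to_subtype
    have hne : Nonempty (MulAction.orbit Γ W) := ⟨⟨W, MulAction.mem_orbit_self W⟩⟩
    rw [← Nat.card_coe_set_eq]
    exact Nat.card_pos.ne'
  · intro g hg w hw
    have h1 : W.map (ρ g) = W := MulAction.mem_stabilizer_iff.1 hg
    rw [← h1]
    exact Submodule.mem_map_of_mem hw

theorem lin_vnil {K : Type} [Field K] [IsAlgClosed K] (d : ℕ) : ∀ {V Γ : Type} [AddCommGroup V]
    [Module K V] [FiniteDimensional K V] [Group Γ] [Group.IsSolvable Γ]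
    (ρ : Representation K Γ V), Module.finrank K V = d → VNil (fun g v => ρ g v) := by
  induction d using Nat.strong_induction_on with
  | _ d ih =>
  intro V Γ _ _ _ _ hs ρ hd
  by_cases hV : Subsingleton V
  · exact VNil.of_triv ⊤ (by simp) fun g _ a => Subsingleton.elim _ _
  have hV' : Nontrivial V := not_subsingleton_iff_nontrivial.1 hV
  by_cases hirr : StrIrr ρ
  · refine VNil.of_triv ⊤ (by simp) fun g hg a => ?_
    have hcomm : ∀ x y : Γ, ρ (x * y) = ρ (y * x) := by
      intro x y
      obtain ⟨c, hc⟩ := scal_of_solvable ρ hirr x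
      refine LinearMap.ext fun v => ?_
      rw [map_mul, map_mul, Module.End.mul_apply, Module.End.mul_apply, hc, hc, map_smul]
    have : ⁅(⊤ : Subgroup Γ), ⊤⁆ ≤ (MonoidHom.ker ρ.toHomUnits) := by
      rw [Subgroup.commutator_le]
      intro x _ y _
      rw [MonoidHom.mem_ker, commutatorElement_def]
      refine Units.ext ?_
      change ρ (x * y * x⁻¹ * y⁻¹) = 1
      rw [mul_assoc, map_mul, hcomm x y, ← map_mul, show y * x * (x⁻¹ * y⁻¹) = 1 by group, map_one]
    have h2 := congrArg Units.val (MonoidHom.mem_ker.1 (this hg))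
    have h3 : ρ g = 1 := h2
    rw [h3]; rfl
  · unfold StrIrr at hirr
    push Not at hirr
    obtain ⟨W, hW, hW0, hW1⟩ := hirr
    obtain ⟨H, hH, hHW⟩ := stab_index ρ W hW
    refine VNil.of_subgroup H hH ?_
    let ρ1 : Representation K H V := ρ.comp H.subtype
    have hle : ∀ g, W ≤ W.comap (ρ1 g) := fun g w hw => hHW g g.2 w hw
    let ρW : Representation K H W := ρ1.subrepresentation W hle
    let ρQ : Representation K H (V ⧸ W) := ρ1.quotient W hle
    have hlt : Module.finrank K W < d := hd ▸ Submodule.finrank_lt hW1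
    have hlt2 : Module.finrank K (V ⧸ W) < d := by
      have := Submodule.finrank_quotient_add_finrank W
      have h3 : 0 < Module.finrank K W := by
        have := Submodule.nontrivial_iff_ne_bot.2 hW0
        exact Module.finrank_pos
      omega
    refine VNil.ext (B := W) (C := V ⧸ W) (fun g => map_zero _) (fun g => map_zero _)
      (ih _ hlt ρW rfl) (ih _ hlt2 ρQ rfl)
      W.subtype.toAddMonoidHom W.mkQ.toAddMonoidHom (fun g b => rfl) (fun g b => rfl) ?_
    intro a ha
    exact ⟨⟨a, (Submodule.Quotient.mk_eq_zero W).1 ha⟩, rfl⟩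


open scoped nonZeroDivisors TensorProduct in
theorem dom_vnil {R M Γ : Type} [CommRing R] [IsDomain R] [AddCommGroup M] [Module R M]
    [Group Γ] [Group.IsSolvable Γ] (ρ : Representation R Γ M)
    (htf : ∀ r : R, r ≠ 0 → ∀ m : M, r • m = 0 → m = 0) (hr : Module.rank R M < Cardinal.aleph0) :
    VNil (fun g m => ρ g m) := by
  let F := FractionRing R
  let K := AlgebraicClosure F
  let ρ1 : Representation F Γ (F ⊗[R] M) :=
    ((Module.End.baseChangeHom R F M : _ →ₐ[R] _) : _ →* _).comp ρ
  let ρ2 : Representation K Γ (K ⊗[F] (F ⊗[R] M)) :=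
    ((Module.End.baseChangeHom F K (F ⊗[R] M) : _ →ₐ[F] _) : _ →* _).comp ρ1
  have hfd : FiniteDimensional F (F ⊗[R] M) := by
    have h1 : Module.rank F (F ⊗[R] M) = Module.rank R M :=
      (TensorProduct.isBaseChange R M F).rank_eq
    rw [← h1, Module.rank_lt_aleph0_iff] at hr
    exact hr
  have h2 : VNil (fun g v => ρ2 g v) := lin_vnil _ ρ2 rfl
  have h1 : VNil (fun g v => ρ1 g v) := by
    refine h2.of_inj (TensorProduct.mk F K (F ⊗[R] M) 1).toAddMonoidHom ?_ ?_
    · exact Module.FaithfullyFlat.tensorProduct_mk_injective (A := F) (B := K) (F ⊗[R] M)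
    · intro g a
      rfl
  refine h1.of_inj (TensorProduct.mk R F M 1).toAddMonoidHom ?_ ?_
  · rw [injective_iff_map_eq_zero]
    intro a ha
    have := (IsLocalizedModule.eq_zero_iff R⁰ (TensorProduct.mk R F M 1)).1 ha
    obtain ⟨c, hc⟩ := this
    exact htf c (nonZeroDivisors.coe_ne_zero c) a hc
  · intro g a
    rfl

/-- dual action -/
def dualRep {Γ A : Type} (R E : Type) [Group Γ] [AddCommGroup A] [CommRing R] [AddCommGroup E]
    [Module R E] (ρ : Representation ℤ Γ A) : Representation R Γ (A →+ E) where
  toFun g :=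
    { toFun := fun f => f.comp (ρ g⁻¹).toAddMonoidHom
      map_add' := fun _ _ => rfl
      map_smul' := fun _ _ => rfl }
  map_one' := by
    ext f a
    simp
  map_mul' g h := by
    ext f a
    simp

theorem dual_kill {Γ A R E : Type} [Group Γ] [AddCommGroup A] [CommRing R] [AddCommGroup E]
    [Module R E] (ρ : Representation ℤ Γ A) (l : List Γ) : ∀ (f : A →+ E) (a : A),
    (kill (fun g f => dualRep R E ρ g f) l f) a =
      f (kill (fun g a => ρ g a) (l.map (·⁻¹)).reverse a) := by
  induction l with
  | nil => intro f a; rfl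
  | cons g l ih =>
    intro f a
    rw [List.map_cons, List.reverse_cons, kill_append]
    change ((dualRep R E ρ g) (kill (fun g f => dualRep R E ρ g f) l f) -
      kill (fun g f => dualRep R E ρ g f) l f) a = _
    rw [AddMonoidHom.sub_apply, ih, ← ih f (kill _ [g⁻¹] a)]
    change (kill (fun g f => dualRep R E ρ g f) l f) (ρ g⁻¹ a) - _ =
      (kill (fun g f => dualRep R E ρ g f) l f) (ρ g⁻¹ a - a)
    rw [map_sub, ← ih f a]

theorem dual_nil {Γ A R E : Type} [Group Γ] [AddCommGroup A] [CommRing R] [AddCommGroup E]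
    [Module R E] (ρ : Representation ℤ Γ A) (N : Subgroup Γ) (n : ℕ)
    (h : NilAct (fun g f => dualRep R E ρ g f) N n) (l : List Γ) (hl : l.length = n)
    (hN : ∀ g ∈ l, g ∈ N) (f : A →+ E) (a : A) : f (kill (fun g a => ρ g a) l a) = 0 := by
  have h1 := dual_kill (R := R) ρ (l.map (·⁻¹)).reverse f a
  rw [h _ (by simpa using hl) (by
    intro g hg
    simp only [List.mem_reverse, List.mem_map] at hg
    obtain ⟨x, hx, rfl⟩ := hg
    exact N.inv_mem (hN x hx))] at h1
  simp only [List.map_reverse, List.reverse_reverse, List.map_map] at h1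
  have h2 : ((fun x : Γ => x⁻¹) ∘ fun x => x⁻¹) = id := by ext; simp
  rw [h2, List.map_id] at h1
  exact h1.symm

theorem hom_rank {S : Set ℕ} {R E : Type} [CommRing R] [IsDomain R] [AddCommGroup E] [Module R E]
    (hF : ∀ (B : Type) [AddCommGroup B], Fac S B → Module.rank R (B →+ E) < Cardinal.aleph0)
    {A : Type} [AddCommGroup A] (h : AMin S A) : Module.rank R (A →+ E) < Cardinal.aleph0 := by
  induction h with
  | triv A h =>
    have : Subsingleton (A →+ E) := ⟨fun f g => by ext a; rw [Subsingleton.elim a 0]; simp⟩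
    rw [rank_subsingleton']
    exact Cardinal.aleph0_pos
  | ext A B hB hF' ih =>
    have h2 := hF _ hF'
    let res : (A →+ E) →ₗ[R] (B →+ E) :=
      { toFun := fun f => f.comp B.subtype
        map_add' := fun _ _ => rfl
        map_smul' := fun _ _ => rfl }
    let inf : ((A ⧸ B) →+ E) →ₗ[R] (A →+ E) :=
      { toFun := fun f => f.comp (QuotientAddGroup.mk' B)
        map_add' := fun _ _ => rfl
        map_smul' := fun _ _ => rfl }
    rw [← LinearMap.rank_range_add_rank_ker res]
    have h3 : LinearMap.ker res ≤ LinearMap.range inf := by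
      intro f hf
      refine ⟨QuotientAddGroup.lift B f ?_, ?_⟩
      · intro b hb
        exact congrArg (fun u : B →+ E => u ⟨b, hb⟩) (LinearMap.mem_ker.1 hf)
      · ext a; rfl
    refine Cardinal.add_lt_aleph0 ((Submodule.rank_le _).trans_lt ih) ?_
    exact ((Submodule.rank_mono h3).trans (rank_range_le inf)).trans_lt h2

theorem hom_rat_rank {S : Set ℕ} (B : Type) [AddCommGroup B] (h : Fac S B) :
    Module.rank ℚ (B →+ ℚ) < Cardinal.aleph0 := by
  rcases h with ⟨h, hh⟩ | ⟨p, hp, hp', h⟩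
  · let ev : (B →+ ℚ) →ₗ[ℚ] ℚ :=
      { toFun := fun f => f h
        map_add' := fun _ _ => rfl
        map_smul' := fun _ _ => rfl }
    have hinj : Function.Injective ev := by
      intro f g hfg
      ext a
      obtain ⟨n, rfl⟩ := hh a
      rw [map_zsmul, map_zsmul]
      congr 1
    refine (LinearMap.rank_le_of_injective ev hinj).trans_lt ?_
    rw [Module.rank_self]
    exact Cardinal.one_lt_aleph0
  · have : Subsingleton (B →+ ℚ) := by
      refine ⟨fun f g => ?_⟩
      ext a
      obtain ⟨k, hk⟩ := h.1 a
      have hz : ∀ f : B →+ ℚ, f a = 0 := by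
        intro f
        have := congrArg f hk
        rw [map_nsmul, map_zero, nsmul_eq_mul] at this
        have hp0 : ((p ^ k : ℕ) : ℚ) ≠ 0 := by
          exact_mod_cast pow_ne_zero _ hp'.ne_zero
        exact (mul_eq_zero.1 this).resolve_left hp0
      rw [hz f, hz g]
    rw [rank_subsingleton']
    exact Cardinal.aleph0_pos

theorem tf_vnil {S : Set ℕ} {Γ A : Type} [Group Γ] [Group.IsSolvable Γ] [AddCommGroup A]
    (hA : AMin S A) (htf : ∀ (n : ℤ) (a : A), n ≠ 0 → n • a = 0 → a = 0)
    (ρ : Representation ℤ Γ A) : VNil (fun g a => ρ g a) := by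
  obtain ⟨H, hH, n, hn⟩ := dom_vnil (dualRep ℚ ℚ ρ)
    (fun r hr m hm => (smul_eq_zero.1 hm).resolve_left hr)
    (hom_rank (fun B _ hB => hom_rat_rank B hB) hA)
  refine ⟨H, hH, n, fun l hl hg a => ?_⟩
  by_contra hne
  obtain ⟨f, hf⟩ := (Module.Baer.of_divisible ℚ).extension_property_addMonoidHom
    (zmultiplesHom A (kill (fun g a => ρ g a) l a)) (by
      rw [injective_iff_map_eq_zero]
      intro m hm
      by_contra hm0
      exact hne (htf m _ hm0 hm)) (Int.castAddHom ℚ)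
  have h1 := congrArg (fun u : ℤ →+ ℚ => u 1) hf
  simp at h1
  have h2 := dual_nil ρ _ n hn l hl hg f a
  rw [h2] at h1
  exact zero_ne_one h1


/-- endomorphism ring of the quasicyclic group -/
def PEnd (p : ℕ) : Type := AddMonoid.End (pruferSubgroup p)

instance (p : ℕ) : Ring (PEnd p) := inferInstanceAs (Ring (AddMonoid.End (pruferSubgroup p)))

instance (p : ℕ) : Module (PEnd p) (pruferSubgroup p) :=
  inferInstanceAs (Module (AddMonoid.End (pruferSubgroup p)) (pruferSubgroup p))

theorem pend_ext {p : ℕ} {f g : PEnd p} (h : ∀ x : pruferSubgroup p, f • x = g • x) : f = g :=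
  AddMonoidHom.ext h

theorem pend_mult {p : ℕ} (hp : p.Prime) (k : ℕ) :
    ∃ c : pruferSubgroup p, p ^ k • c = 0 ∧ ∀ y : pruferSubgroup p, p ^ k • y = 0 →
      ∃ n : ℤ, y = n • c := by
  have hp0 : (p : ℚ) ≠ 0 := by exact_mod_cast hp.ne_zero
  have h0 : p ^ k • ((1 / (p : ℚ) ^ k : ℚ) : RatCircle) = 0 := by
    rw [← QuotientAddGroup.mk_nsmul, QuotientAddGroup.eq_zero_iff]
    refine ⟨1, ?_⟩
    simp only [one_smul, nsmul_eq_mul]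
    push_cast
    field_simp
  refine ⟨⟨((1 / (p : ℚ) ^ k : ℚ) : RatCircle), k, h0⟩, Subtype.ext h0, ?_⟩
  intro y hy
  obtain ⟨m, hm⟩ := prufer_cyc_aux hp k y (congrArg Subtype.val hy)
  exact ⟨m, Subtype.ext hm⟩

instance {p : ℕ} [hp : Fact p.Prime] : CommRing (PEnd p) :=
  { (inferInstance : Ring (PEnd p)) with
    mul_comm := by
      intro f g
      refine pend_ext fun x => ?_
      obtain ⟨k, hk⟩ := prufer_tors p x
      obtain ⟨c, hc, hc'⟩ := pend_mult hp.out k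
      have h1 : ∀ f : PEnd p, p ^ k • (f • c) = 0 := by
        intro f
        rw [smul_comm, hc, smul_zero]
      obtain ⟨m, hm⟩ := hc' _ (h1 f)
      obtain ⟨n, hn⟩ := hc' _ (h1 g)
      obtain ⟨r, rfl⟩ := hc' _ hk
      have e : ∀ (f : PEnd p) (j : ℤ) (y : pruferSubgroup p), f • (j • y) = j • (f • y) :=
        fun f j y => smul_comm f j y
      simp only [mul_smul, e, hm, hn]
      rw [smul_comm n m] }

theorem pend_surj {p : ℕ} (hp : p.Prime) (f : PEnd p) (hf : f ≠ 0) (y : pruferSubgroup p) :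
    ∃ x : pruferSubgroup p, f • x = y := by
  have : ∃ z : pruferSubgroup p, f • z ≠ 0 := by
    by_contra h
    push Not at h
    exact hf (pend_ext fun x => by rw [h, zero_smul])
  obtain ⟨z, hz⟩ := this
  obtain ⟨j, hj⟩ := prufer_tors p y
  obtain ⟨w, hw⟩ := div_of_pdiv hp (prufer_tors p) (prufer_pdiv hp) ((p : ℤ) ^ j)
    (pow_ne_zero _ (by exact_mod_cast hp.ne_zero)) z
  rcases (prufer_uni hp).2 (f • w) y with ⟨n, hn⟩ | ⟨n, hn⟩
  · exfalso
    apply hz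
    have hj' : (p : ℤ) ^ j • y = 0 := by exact_mod_cast hj
    rw [← hw, smul_comm f, hn, smul_comm, hj', smul_zero]
  · exact ⟨n • w, by rw [smul_comm, hn]⟩

instance {p : ℕ} [hp : Fact p.Prime] : IsDomain (PEnd p) := by
  have : Nontrivial (PEnd p) := by
    obtain ⟨a, ha⟩ := prufer_nontriv hp.out
    refine ⟨0, 1, fun h => ha ?_⟩
    have := congrArg (fun f : PEnd p => f • a) h
    simpa using this.symm
  have : NoZeroDivisors (PEnd p) := by
    refine ⟨fun {f g} h => ?_⟩
    by_contra hne
    push Not at hne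
    apply hne.1
    refine pend_ext fun x => ?_
    obtain ⟨y, rfl⟩ := pend_surj hp.out g hne.2 x
    rw [← mul_smul, h]
    simp
  exact NoZeroDivisors.to_isDomain _

theorem prufer_baer {p : ℕ} (hp : p.Prime) : Module.Baer ℤ (pruferSubgroup p) := by
  have : ∀ (n : ℤ) (a : pruferSubgroup p), n ≠ 0 → ∃ b, n • b = a := fun n a hn =>
    div_of_pdiv hp (prufer_tors p) (prufer_pdiv hp) n hn a
  let _ : DivisibleBy (pruferSubgroup p) ℤ := divisibleByOfSMulRightSurj _ _
    (fun {n} hn a => this n a hn)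
  exact Module.Baer.of_divisible _

theorem pend_pow_ne {p : ℕ} [hp : Fact p.Prime] (k : ℕ) : ((p ^ k : ℕ) : PEnd p) ≠ 0 := by
  intro h
  obtain ⟨a, ha⟩ := prufer_nontriv hp.out
  obtain ⟨b, hb⟩ := div_of_pdiv hp.out (prufer_tors p) (prufer_pdiv hp.out) ((p : ℤ) ^ k)
    (pow_ne_zero _ (by exact_mod_cast hp.out.ne_zero)) a
  apply ha
  rw [← hb]
  have := congrArg (fun f : PEnd p => f • b) h
  simp only [zero_smul, Nat.cast_smul_eq_nsmul] at this
  exact_mod_cast this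

theorem factor {p : ℕ} (hp : p.Prime) {B : Type} [AddCommGroup B] (f g : B →+ pruferSubgroup p)
    (h : f.ker ≤ g.ker) : ∃ r : PEnd p, g = r • f := by
  obtain ⟨r, hr⟩ := (prufer_baer hp).extension_property_addMonoidHom
    (QuotientAddGroup.kerLift f) (QuotientAddGroup.kerLift_injective f)
    (QuotientAddGroup.lift f.ker g h)
  refine ⟨r, ?_⟩
  ext b
  have := congrArg (fun u : (B ⧸ f.ker) →+ pruferSubgroup p => u (QuotientAddGroup.mk b)) hr
  exact congrArg Subtype.val this.symm

theorem hom_prufer_rank {S : Set ℕ} {p : ℕ} [hp : Fact p.Prime] (B : Type) [AddCommGroup B]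
    (h : Fac S B) :
    Module.rank (PEnd p) (B →+ pruferSubgroup p) < Cardinal.aleph0 := by
  rcases h with ⟨h, hh⟩ | ⟨q, hq, hq', h⟩
  · rw [rank_eq_zero_iff.2]
    · exact Cardinal.aleph0_pos
    · intro f
      obtain ⟨k, hk⟩ := prufer_tors p (f h)
      refine ⟨(p ^ k : ℕ), pend_pow_ne k, ?_⟩
      refine AddMonoidHom.ext fun a => ?_
      obtain ⟨n, rfl⟩ := hh a
      rw [AddMonoidHom.smul_apply, Nat.cast_smul_eq_nsmul, map_zsmul, smul_comm, hk, smul_zero]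
      rfl
  · have : Module.rank (PEnd p) (B →+ pruferSubgroup p) ≤ (1 : ℕ) := by
      refine rank_le fun s hs => ?_
      by_contra hc
      push Not at hc
      obtain ⟨f, hf, g, hg, hfg⟩ := Finset.one_lt_card.1 hc
      -- dependence
      have key : ∀ f ∈ s, ∀ g ∈ s, f ≠ g → ¬ f.ker ≤ g.ker := by
        intro f hf g hg hfg hle
        obtain ⟨r, hr⟩ := factor hp.out f g hle
        have hs' : LinearIndepOn (PEnd p) id (s : Set (B →+ pruferSubgroup p)) := hs
        have h1 := hs'.mono (t := {f, g}) (by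
          intro x hx
          rcases hx with rfl | rfl
          · exact hf
          · exact hg)
        have h2 := (LinearIndepOn.pair_iff _ hfg).1 h1 r (-1) (by
          rw [id, id, hr, neg_one_smul, add_neg_cancel])
        exact one_ne_zero (neg_eq_zero.1 h2.2)
      by_cases hle : f.ker ≤ g.ker
      · exact key f hf g hg hfg hle
      · refine key g hg f hf hfg.symm ?_
        intro b hb
        rw [SetLike.not_le_iff_exists] at hle
        obtain ⟨a, ha, ha'⟩ := hle
        rcases h.2 a b with ⟨n, hn⟩ | ⟨n, hn⟩
        · exfalso
          apply ha'
          rw [hn]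
          exact AddSubgroup.zsmul_mem _ hb n
        · rw [hn]
          exact AddSubgroup.zsmul_mem _ ha n
    exact this.trans_lt Cardinal.natCast_lt_aleph0

theorem prime_tors {S : Set ℕ} {A : Type} [AddCommGroup A] (h : AMin S A) :
    {p : ℕ | p.Prime ∧ ∃ a : A, a ≠ 0 ∧ p • a = 0}.Finite := by
  induction h with
  | triv A h =>
    convert Set.finite_empty
    ext p
    simp only [Set.mem_ofPred_eq, Set.mem_empty_iff_false, iff_false]
    rintro ⟨_, a, ha, _⟩
    exact ha (Subsingleton.elim _ _)
  | ext A B hB hF ih =>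
    have hq : {p : ℕ | p.Prime ∧ ∃ a : A ⧸ B, a ≠ 0 ∧ p • a = 0}.Finite := by
      rcases hF with ⟨h, hh⟩ | ⟨q, hq, hq', h⟩
      · by_cases h0 : ∃ n : ℕ, n ≠ 0 ∧ n • h = 0
        · obtain ⟨n, hn, hn'⟩ := h0
          refine (Set.finite_Iic n).subset ?_
          rintro p ⟨hp, a, ha, hpa⟩
          rw [Set.mem_Iic]
          by_contra hlt
          have hcop : Nat.Coprime p n := by
            rw [Nat.Prime.coprime_iff_not_dvd hp]
            exact fun hd => hlt (Nat.le_of_dvd (Nat.pos_of_ne_zero hn) hd)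
          have hna : n • a = 0 := by
            obtain ⟨m, rfl⟩ := hh a
            rw [smul_comm, hn', smul_zero]
          have h1 : addOrderOf a ∣ Nat.gcd p n :=
            Nat.dvd_gcd (addOrderOf_dvd_of_nsmul_eq_zero hpa) (addOrderOf_dvd_of_nsmul_eq_zero hna)
          rw [hcop, Nat.dvd_one, AddMonoid.addOrderOf_eq_one_iff] at h1
          exact ha h1
        · convert Set.finite_empty
          ext p
          simp only [Set.mem_ofPred_eq, Set.mem_empty_iff_false, iff_false]
          rintro ⟨hp, a, ha, hpa⟩
          obtain ⟨m, rfl⟩ := hh a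
          apply h0
          refine ⟨(p * m.natAbs), ?_, ?_⟩
          · refine mul_ne_zero hp.ne_zero ?_
            rw [Int.natAbs_ne_zero]
            rintro rfl
            exact ha (zero_smul _ _)
          · have : (((p * m.natAbs : ℕ) : ℤ)) • h = 0 := by
              rw [Nat.cast_mul, mul_smul]
              rcases Int.natAbs_eq m with hm | hm
              · rw [← hm]
                exact_mod_cast hpa
              · have : ((m.natAbs : ℕ) : ℤ) = - m := by omega
                rw [this, neg_smul, smul_neg, neg_eq_zero]
                exact_mod_cast hpa
            exact_mod_cast this
      · refine (Set.finite_singleton q).subset ?_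
        rintro p ⟨hp, a, ha, hpa⟩
        by_contra hne
        obtain ⟨k, hk⟩ := h.1 a
        have hcop : Nat.Coprime p (q ^ k) :=
          Nat.Coprime.pow_right k ((Nat.coprime_primes hp hq').2 hne)
        have h1 : addOrderOf a ∣ Nat.gcd p (q ^ k) :=
          Nat.dvd_gcd (addOrderOf_dvd_of_nsmul_eq_zero hpa) (addOrderOf_dvd_of_nsmul_eq_zero hk)
        rw [hcop, Nat.dvd_one, AddMonoid.addOrderOf_eq_one_iff] at h1
        exact ha h1
    refine (ih.union hq).subset ?_
    rintro p ⟨hp, a, ha, hpa⟩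
    by_cases haB : a ∈ B
    · left
      refine ⟨hp, ⟨a, haB⟩, ?_, Subtype.ext hpa⟩
      intro h
      exact ha (congrArg Subtype.val h)
    · right
      refine ⟨hp, QuotientAddGroup.mk a, ?_, ?_⟩
      · rwa [Ne, QuotientAddGroup.eq_zero_iff]
      · rw [← QuotientAddGroup.mk_nsmul, hpa, QuotientAddGroup.mk_zero]

theorem div_part {S : Set ℕ} {A : Type} [AddCommGroup A] (h : AMin S A)
    (ht : ∀ a : A, ∃ n : ℤ, n ≠ 0 ∧ n • a = 0) :
    ∃ m : ℤ, m ≠ 0 ∧ ∀ (n : ℤ), n ≠ 0 → ∀ a : A, ∃ b : A, m • a = n • m • b := by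
  induction h with
  | triv A h => exact ⟨1, one_ne_zero, fun n _ a => ⟨a, Subsingleton.elim _ _⟩⟩
  | ext A B hB hF ih =>
    obtain ⟨m, hm, hmd⟩ := ih (by
      rintro ⟨a, ha⟩
      obtain ⟨n, hn, hna⟩ := ht a
      exact ⟨n, hn, Subtype.ext hna⟩)
    have hbdd : (∃ k : ℤ, k ≠ 0 ∧ ∀ a : A, k • a ∈ B) → ∃ m : ℤ, m ≠ 0 ∧ ∀ (n : ℤ), n ≠ 0 →
        ∀ a : A, ∃ b : A, m • a = n • m • b := by
      rintro ⟨k, hk, hkB⟩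
      refine ⟨k * m, mul_ne_zero hk hm, fun n hn a => ?_⟩
      obtain ⟨b, hb⟩ := hmd (n * k) (mul_ne_zero hn hk) ⟨k • a, hkB a⟩
      have := congrArg Subtype.val hb
      refine ⟨b, ?_⟩
      rw [mul_comm k m, mul_smul]
      refine this.trans ?_
      change (n * k) • m • (b : A) = n • (m * k) • (b : A)
      rw [smul_smul, smul_smul]
      congr 1
      ring
    rcases hF with ⟨h, hh⟩ | ⟨q, hq, hq', h⟩
    · apply hbdd
      obtain ⟨h, rfl⟩ := QuotientAddGroup.mk_surjective h
      obtain ⟨k, hk, hkh⟩ := ht h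
      refine ⟨k, hk, fun a => ?_⟩
      obtain ⟨n, hn⟩ := hh (QuotientAddGroup.mk a)
      rw [← QuotientAddGroup.eq_zero_iff, QuotientAddGroup.mk_zsmul, hn, smul_comm,
        ← QuotientAddGroup.mk_zsmul, hkh, QuotientAddGroup.mk_zero, smul_zero]
    · rcases h.dich hq' with ⟨_, k, hk⟩ | hd
      · apply hbdd
        refine ⟨((q ^ k : ℕ) : ℤ), by exact_mod_cast pow_ne_zero _ hq'.ne_zero, fun a => ?_⟩
        rw [← QuotientAddGroup.eq_zero_iff, QuotientAddGroup.mk_zsmul, natCast_zsmul]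
        exact hk _
      · refine ⟨m, hm, fun n hn a => ?_⟩
        obtain ⟨b, hb⟩ := div_of_pdiv hq' h.1 hd n hn (QuotientAddGroup.mk a)
        obtain ⟨b, rfl⟩ := QuotientAddGroup.mk_surjective b
        rw [← QuotientAddGroup.mk_zsmul, QuotientAddGroup.eq] at hb
        obtain ⟨c, hc⟩ := hmd n hn ⟨_, hb⟩
        have hc' : m • (-(n • b) + a) = n • m • (c : A) := congrArg Subtype.val hc
        refine ⟨b + c, ?_⟩
        rw [smul_add, smul_add, ← hc', smul_add, smul_neg, smul_comm m n]
        abel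


/-- homs to the quasicyclic p-group kill everything -/
def PKill {Γ A : Type} [Group Γ] [AddCommGroup A] (ρ : Representation ℤ Γ A) (p : ℕ)
    (H : Subgroup Γ) (n : ℕ) : Prop :=
  ∀ l : List Γ, l.length = n → (∀ g ∈ l, g ∈ ⁅H, H⁆) → ∀ (f : A →+ pruferSubgroup p) (a : A),
    f (kill (fun g a => ρ g a) l a) = 0

theorem PKill.mono {Γ A : Type} [Group Γ] [AddCommGroup A] {ρ : Representation ℤ Γ A} {p : ℕ}
    {H K : Subgroup Γ} {n m : ℕ} (h : PKill ρ p H n) (hK : K ≤ H) (hn : n ≤ m) : PKill ρ p K m := by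
  intro l hl hg f a
  rw [← List.take_append_drop n l, kill_append]
  refine h _ (by rw [List.length_take]; omega) ?_ f _
  intro g hgl
  exact Subgroup.commutator_mono hK hK (hg g (List.mem_of_mem_take hgl))

theorem exists_pkill {S : Set ℕ} {Γ A : Type} [Group Γ] [Group.IsSolvable Γ] [AddCommGroup A]
    (hA : AMin S A) (hd : ∀ (n : ℤ) (a : A), n ≠ 0 → ∃ b, n • b = a)
    (ρ : Representation ℤ Γ A) (p : ℕ) (hp : p.Prime) :
    ∃ H : Subgroup Γ, H.index ≠ 0 ∧ ∃ n, PKill ρ p H n := by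
  have : Fact p.Prime := ⟨hp⟩
  obtain ⟨H, hH, n, hn⟩ := dom_vnil (dualRep (PEnd p) (pruferSubgroup p) ρ) (by
      intro r hr f hf
      refine AddMonoidHom.ext fun a => ?_
      -- the kernel of r is bounded
      obtain ⟨c, hc⟩ := prufer_nontriv hp
      obtain ⟨x, hx⟩ := pend_surj hp r hr c
      have hbd : ∃ k : ℕ, ∀ y : pruferSubgroup p, r • y = 0 → p ^ k • y = 0 := by
        obtain ⟨k, hk⟩ := prufer_tors p x
        refine ⟨k, fun y hy => ?_⟩
        rcases (prufer_uni hp).2 y x with ⟨m, hm⟩ | ⟨m, hm⟩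
        · rw [hm, smul_comm, hk, smul_zero]
        · exfalso
          apply hc
          rw [← hx, hm, smul_comm, hy, smul_zero]
      obtain ⟨k, hk⟩ := hbd
      obtain ⟨b, hb⟩ := hd ((p ^ k : ℕ) : ℤ) a (by exact_mod_cast pow_ne_zero _ hp.ne_zero)
      rw [← hb, map_zsmul, natCast_zsmul]
      exact hk _ (congrArg (fun u : A →+ pruferSubgroup p => u b) hf))
    (hom_rank (fun B _ hB => hom_prufer_rank B hB) hA)
  exact ⟨H, hH, n, fun l hl hg f a => dual_nil ρ _ n hn l hl hg f a⟩

theorem div_vnil {S : Set ℕ} {Γ A : Type} [Group Γ] [Group.IsSolvable Γ] [AddCommGroup A]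
    (hA : AMin S A) (hd : ∀ (n : ℤ) (a : A), n ≠ 0 → ∃ b, n • b = a)
    (ht : ∀ a : A, ∃ n : ℤ, n ≠ 0 ∧ n • a = 0)
    (ρ : Representation ℤ Γ A) : VNil (fun g a => ρ g a) := by
  have hfin := prime_tors hA
  have key : ∀ s : Finset ℕ, (∀ p ∈ s, p.Prime) →
      ∃ H : Subgroup Γ, H.index ≠ 0 ∧ ∃ n, ∀ p ∈ s, PKill ρ p H n := by
    intro s
    induction s using Finset.induction_on with
    | empty => exact fun _ => ⟨⊤, by simp, 0, by simp⟩
    | insert p s hp ih =>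
      intro hs
      obtain ⟨H, hH, n, hn⟩ := ih fun q hq => hs q (Finset.mem_insert_of_mem hq)
      obtain ⟨K, hK, m, hm⟩ := exists_pkill hA hd ρ p (hs p (Finset.mem_insert_self _ _))
      refine ⟨H ⊓ K, Subgroup.index_inf_ne_zero hH hK, n + m, fun q hq => ?_⟩
      rcases Finset.mem_insert.1 hq with rfl | hq
      · exact hm.mono inf_le_right (by omega)
      · exact (hn q hq).mono inf_le_left (by omega)
  obtain ⟨H, hH, n, hn⟩ := key hfin.toFinset (fun p hp => ((Set.Finite.mem_toFinset _).1 hp).1)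
  refine ⟨H, hH, n, fun l hl hg a => ?_⟩
  by_contra hne
  set x := kill (fun g a => ρ g a) l a with hx
  -- an element of prime order
  have hfo : IsOfFinAddOrder x := by
    obtain ⟨k, hk, hkx⟩ := ht x
    exact isOfFinAddOrder_iff_zsmul_eq_zero.2 ⟨k, hk, hkx⟩
  have ho1 : addOrderOf x ≠ 1 := by rwa [Ne, AddMonoid.addOrderOf_eq_one_iff]
  obtain ⟨p, hp, hpd⟩ := Nat.exists_prime_and_dvd ho1
  obtain ⟨c, hc⟩ := hpd
  have hpos := hfo.addOrderOf_pos
  have hy0 : c • x ≠ 0 := by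
    intro h0
    have h1 := addOrderOf_dvd_of_nsmul_eq_zero h0
    rw [hc] at h1 hpos
    have h2 : 0 < c := Nat.pos_of_mul_pos_left hpos
    have := Nat.le_of_dvd h2 h1
    nlinarith [hp.two_le]
  have hpy : p • c • x = 0 := by rw [← mul_smul, ← hc, addOrderOf_nsmul_eq_zero]
  have : Fact p.Prime := ⟨hp⟩
  obtain ⟨e0, he0⟩ := prufer_nontriv hp
  have : ∃ e : pruferSubgroup p, e ≠ 0 ∧ p • e = 0 := by
    obtain ⟨k, hk⟩ := prufer_tors p e0
    induction k generalizing e0 with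
    | zero => exact absurd (by simpa using hk) he0
    | succ k ih =>
      by_cases h1 : p • e0 = 0
      · exact ⟨e0, he0, h1⟩
      · exact ih _ h1 (by rw [← mul_smul, ← pow_succ, hk])
  obtain ⟨e, he, hpe⟩ := this
  let i : ZMod p →+ A := ZMod.lift p ⟨zmultiplesHom A (c • x), by simpa using hpy⟩
  have hi : Function.Injective i := by
    rw [ZMod.lift_injective]
    intro m hm
    have hm' : m • c • x = 0 := hm
    rw [ZMod.intCast_zmod_eq_zero_iff_dvd]
    by_contra hnd
    have hcop : IsCoprime (p : ℤ) m :=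
      (Nat.prime_iff_prime_int.1 hp).coprime_iff_not_dvd.2 hnd
    obtain ⟨u, v, huv⟩ := hcop
    apply hy0
    rw [← one_smul ℤ (c • x), ← huv, add_smul, mul_smul, mul_smul, hm', natCast_zsmul, hpy]
    simp
  obtain ⟨f, hf⟩ := (prufer_baer hp).extension_property_addMonoidHom i hi
    (ZMod.lift p ⟨zmultiplesHom _ e, by simpa using hpe⟩)
  have h1 := congrArg (fun u : ZMod p →+ pruferSubgroup p => u ((1 : ℤ) : ZMod p)) hf
  have h2 : f (c • x) = e := by
    have e1 : i ((1 : ℤ) : ZMod p) = c • x := by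
      simp only [i, ZMod.lift_coe]; simp
    have e2 : (ZMod.lift p ⟨zmultiplesHom _ e, by simpa using hpe⟩ : ZMod p →+ pruferSubgroup p)
        ((1 : ℤ) : ZMod p) = e := by
      simp only [ZMod.lift_coe]; simp
    rw [← e1]
    exact h1.trans e2
  apply he
  rw [← h2, map_nsmul, hn p ?_ l hl hg f a, smul_zero]
  rw [Set.Finite.mem_toFinset]
  exact ⟨hp, c • x, hy0, hpy⟩

theorem VNil.ext_sub {Γ A : Type} [Group Γ] [AddCommGroup A] (ρ : Representation ℤ Γ A)
    (W : Submodule ℤ A) (hW : ∀ g, W ≤ W.comap (ρ g))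
    (h1 : VNil (fun g a => ρ.subrepresentation W hW g a))
    (h2 : VNil (fun g a => ρ.quotient W hW g a)) : VNil (fun g a => ρ g a) := by
  refine VNil.ext (fun g => map_zero _) (fun g => map_zero _) h1 h2
      W.subtype.toAddMonoidHom W.mkQ.toAddMonoidHom (fun g b => rfl) (fun g b => rfl) ?_
  intro a ha
  exact ⟨⟨a, (Submodule.Quotient.mk_eq_zero W).1 ha⟩, rfl⟩

theorem AMin.sub {S : Set ℕ} {A : Type} [AddCommGroup A] (h : AMin S A) (W : Submodule ℤ A) :
    AMin S W := h.of_inj W.subtype.toAddMonoidHom W.injective_subtype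

theorem AMin.quo {S : Set ℕ} {A : Type} [AddCommGroup A] (h : AMin S A) (W : Submodule ℤ A) :
    AMin S (A ⧸ W) := h.of_surj W.mkQ.toAddMonoidHom W.mkQ_surjective

theorem tors_vnil {S : Set ℕ} {Γ A : Type} [Group Γ] [Group.IsSolvable Γ] [AddCommGroup A]
    (hA : AMin S A) (ht : ∀ a : A, ∃ n : ℤ, n ≠ 0 ∧ n • a = 0)
    (ρ : Representation ℤ Γ A) : VNil (fun g a => ρ g a) := by
  obtain ⟨m, hm, hmd⟩ := div_part hA ht
  let W : Submodule ℤ A := LinearMap.range (LinearMap.lsmul ℤ A m)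
  have hW : ∀ g, W ≤ W.comap (ρ g) := by
    rintro g _ ⟨a, rfl⟩
    exact ⟨ρ g a, by simp⟩
  refine VNil.ext_sub ρ W hW ?_ ?_
  · refine div_vnil (hA.sub W) ?_ ?_ _
    · rintro n ⟨_, a, rfl⟩ hn
      obtain ⟨b, hb⟩ := hmd n hn a
      exact ⟨⟨_, b, rfl⟩, Subtype.ext hb.symm⟩
    · rintro ⟨a, ha⟩
      obtain ⟨n, hn, hna⟩ := ht a
      exact ⟨n, hn, Subtype.ext hna⟩
  · have : Finite (A ⧸ W) := by
      refine (hA.quo W).finite_of_bdd m.natAbs (Int.natAbs_ne_zero.2 hm) ?_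
      intro a
      obtain ⟨a, rfl⟩ := W.mkQ_surjective a
      rw [← map_nsmul]
      refine (Submodule.Quotient.mk_eq_zero W).2 ?_
      rw [← natCast_zsmul]
      rcases Int.natAbs_eq m with h | h
      · exact ⟨a, by rw [← h]; rfl⟩
      · have : ((m.natAbs : ℕ) : ℤ) = - m := by omega
        exact ⟨-a, by rw [this]; simp⟩
    exact VNil.of_finite _

theorem amin_vnil {S : Set ℕ} {Γ A : Type} [Group Γ] [Group.IsSolvable Γ] [AddCommGroup A]
    (hA : AMin S A) (ρ : Representation ℤ Γ A) : VNil (fun g a => ρ g a) := by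
  let W : Submodule ℤ A := Submodule.torsion ℤ A
  have hmem : ∀ a : A, a ∈ W ↔ ∃ n : ℤ, n ≠ 0 ∧ n • a = 0 := by
    intro a
    rw [Submodule.mem_torsion_iff]
    constructor
    · rintro ⟨n, hn⟩
      exact ⟨n, nonZeroDivisors.coe_ne_zero n, hn⟩
    · rintro ⟨n, hn, h⟩
      exact ⟨⟨n, mem_nonZeroDivisors_of_ne_zero hn⟩, h⟩
  have hW : ∀ g, W ≤ W.comap (ρ g) := by
    intro g a ha
    rw [Submodule.mem_comap, hmem]
    obtain ⟨n, hn, h⟩ := (hmem a).1 ha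
    exact ⟨n, hn, by rw [← map_smul, h, map_zero]⟩
  refine VNil.ext_sub ρ W hW ?_ ?_
  · refine tors_vnil (hA.sub W) ?_ _
    rintro ⟨a, ha⟩
    obtain ⟨n, hn, h⟩ := (hmem a).1 ha
    exact ⟨n, hn, Subtype.ext h⟩
  · refine tf_vnil (hA.quo W) ?_ _
    intro n a hn hna
    obtain ⟨a, rfl⟩ := W.mkQ_surjective a
    rw [← map_smul] at hna
    have h1 := (hmem _).1 ((Submodule.Quotient.mk_eq_zero W).1 hna)
    obtain ⟨k, hk, h⟩ := h1
    refine (Submodule.Quotient.mk_eq_zero W).2 ((hmem a).2 ⟨k * n, mul_ne_zero hk hn, ?_⟩)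
    rw [mul_smul, h]


theorem exists_sec {G : Type} [Group G] (X Y : Subgroup G) [hX : X.Normal] [hY : Y.Normal]
    (h : ⁅X, X⁆ ≤ Y) : ∃ (A : Type) (_ : AddCommGroup A) (q : X →* Multiplicative A)
    (ρ : Representation ℤ G A), Function.Surjective q ∧ (∀ x : X, q x = 1 ↔ (x : G) ∈ Y) ∧
    ∀ (g : G) (x : X), ρ g (q x).toAdd = (q (MulAut.conjNormal g x)).toAdd := by
  let _ : CommGroup (X ⧸ Y.subgroupOf X) :=
    { (inferInstance : Group (X ⧸ Y.subgroupOf X)) with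
      mul_comm := by
        intro a b
        obtain ⟨a, rfl⟩ := QuotientGroup.mk_surjective a
        obtain ⟨b, rfl⟩ := QuotientGroup.mk_surjective b
        change ((a * b : X) : X ⧸ Y.subgroupOf X) = ((b * a : X) : X ⧸ Y.subgroupOf X)
        rw [QuotientGroup.eq, Subgroup.mem_subgroupOf]
        have h1 : (b : G)⁻¹ * (a : G)⁻¹ * b * a ∈ Y := by
          have := h (Subgroup.commutator_mem_commutator (X.inv_mem b.2) (X.inv_mem a.2))
          rw [commutatorElement_def, inv_inv, inv_inv] at this
          exact this
        simpa [mul_assoc] using h1 }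
  have hle : ∀ g : G, Y.subgroupOf X ≤ (Y.subgroupOf X).comap (MulAut.conjNormal g : X ≃* X) := by
    intro g x hx
    rw [Subgroup.mem_comap, Subgroup.mem_subgroupOf]
    exact hY.conj_mem _ hx g
  let r : G → (Additive (X ⧸ Y.subgroupOf X)) →+ (Additive (X ⧸ Y.subgroupOf X)) := fun g =>
    MonoidHom.toAdditive (QuotientGroup.map _ _ ((MulAut.conjNormal g : X ≃* X) : X →* X) (hle g))
  refine ⟨Additive (X ⧸ Y.subgroupOf X), inferInstance, QuotientGroup.mk' (Y.subgroupOf X),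
    { toFun := fun g => (r g).toIntLinearMap
      map_one' := ?_
      map_mul' := ?_ }, QuotientGroup.mk'_surjective _, ?_, ?_⟩
  · refine LinearMap.ext fun a => ?_
    obtain ⟨a, rfl⟩ := QuotientGroup.mk_surjective a
    change ((MulAut.conjNormal (1 : G) a : X) : X ⧸ Y.subgroupOf X) = _
    rw [map_one]
    rfl
  · intro g k
    refine LinearMap.ext fun a => ?_
    obtain ⟨a, rfl⟩ := QuotientGroup.mk_surjective a
    change ((MulAut.conjNormal (g * k) a : X) : X ⧸ Y.subgroupOf X) = _
    rw [map_mul]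
    rfl
  · intro x
    exact QuotientGroup.eq_one_iff x
  · intro g x
    rfl

theorem exists_secN {G : Type} [Group G] (N X Y : Subgroup G) [hN : N.Normal] [hX : X.Normal]
    [hY : Y.Normal] (h : ⁅X, X⁆ ≤ Y) (hNX : ⁅N, X⁆ ≤ Y) :
    ∃ (A : Type) (_ : AddCommGroup A) (q : X →* Multiplicative A)
    (ρ : Representation ℤ (G ⧸ N) A), Function.Surjective q ∧ (∀ x : X, q x = 1 ↔ (x : G) ∈ Y) ∧
    ∀ (g : G) (x : X), ρ (QuotientGroup.mk g) (q x).toAdd =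
      (q (MulAut.conjNormal g x)).toAdd := by
  obtain ⟨A, _, q, ρ, hq, hq1, hρ⟩ := exists_sec X Y h
  refine ⟨A, inferInstance, q, QuotientGroup.lift N ρ ?_, hq, hq1, hρ⟩
  intro n hn
  refine LinearMap.ext fun a => ?_
  obtain ⟨x, hx⟩ := hq (Multiplicative.ofAdd a)
  have ha : a = (q x).toAdd := by rw [hx]; rfl
  rw [ha, hρ]
  change (q (MulAut.conjNormal n x)).toAdd = (q x).toAdd
  congr 1
  rw [← mul_inv_eq_one, ← map_inv, ← map_mul, hq1]
  exact hNX (Subgroup.commutator_mem_commutator hn x.2)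

/-- iterated commutators -/
def cfold {G : Type} [Group G] (l : List G) (x : G) : G :=
  l.foldr (fun g x => g * x * g⁻¹ * x⁻¹) x

theorem cfold_append {G : Type} [Group G] (l m : List G) (x : G) :
    cfold (l ++ m) x = cfold l (cfold m x) := by
  simp [cfold]

theorem cfold_mem {G : Type} [Group G] (X : Subgroup G) [hX : X.Normal] (l : List G) (x : G)
    (hx : x ∈ X) : cfold l x ∈ X := by
  induction l with
  | nil => exact hx
  | cons g l ih => exact X.mul_mem (hX.conj_mem _ ih g) (X.inv_mem ih)

theorem cfold_sec {S : Set ℕ} {G : Type} [Group G] [Group.IsSolvable G] (hG : AbSecs S G)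
    (X Y : Subgroup G) [hX : X.Normal] [hY : Y.Normal] (h : ⁅X, X⁆ ≤ Y) :
    ∃ H : Subgroup G, H.index ≠ 0 ∧ ∃ n, ∀ l : List G, l.length = n →
      (∀ g ∈ l, g ∈ ⁅H, H⁆) → ∀ x ∈ X, cfold l x ∈ Y := by
  obtain ⟨A, _, q, ρ, hq, hq1, hρ⟩ := exists_sec X Y h
  have hA : AMin S A := hG X A q hq
  obtain ⟨H, hH, n, hn⟩ := amin_vnil hA ρ
  refine ⟨H, hH, n, fun l hl hg x hx => ?_⟩
  have key : ∀ l : List G, kill (fun g a => ρ g a) l (q ⟨x, hx⟩).toAdd =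
      (q ⟨cfold l x, cfold_mem X l x hx⟩).toAdd := by
    intro l
    induction l with
    | nil => rfl
    | cons g l ih =>
      simp only [kill, List.foldr_cons] at ih ⊢
      rw [ih, hρ]
      rw [← toAdd_div, ← map_div]
      congr 2
      refine Subtype.ext ?_
      rw [Subgroup.coe_div, MulAut.conjNormal_apply, div_eq_mul_inv]
      rfl
  have h1 := hn l hl hg (q ⟨x, hx⟩).toAdd
  rw [key] at h1
  exact (hq1 ⟨cfold l x, _⟩).1 h1

theorem cfold_all {S : Set ℕ} {G : Type} [Group G] [Group.IsSolvable G] (hG : AbSecs S G) (d : ℕ) :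
    ∃ H : Subgroup G, H.index ≠ 0 ∧ ∃ n, ∀ l : List G, l.length = n →
      (∀ g ∈ l, g ∈ ⁅H, H⁆) → ∀ x, cfold l x ∈ derivedSeries G d := by
  induction d with
  | zero => exact ⟨⊤, by simp, 0, fun l _ _ x => by simp⟩
  | succ d ih =>
    obtain ⟨H, hH, n, hn⟩ := ih
    obtain ⟨K, hK, m, hm⟩ := cfold_sec hG (derivedSeries G d) (derivedSeries G (d + 1)) le_rfl
    refine ⟨H ⊓ K, Subgroup.index_inf_ne_zero hH hK, m + n, fun l hl hg x => ?_⟩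
    rw [← List.take_append_drop m l, cfold_append]
    refine hm _ (by rw [List.length_take]; omega) ?_ _ (hn _ (by rw [List.length_drop]; omega) ?_ x)
    · intro g hgl
      exact Subgroup.commutator_mono inf_le_right inf_le_right (hg g (List.mem_of_mem_take hgl))
    · intro g hgl
      exact Subgroup.commutator_mono inf_le_left inf_le_left (hg g (List.mem_of_mem_drop hgl))

theorem nilp_of_cfold {G : Type} [Group G] (n : ℕ)
    (h : ∀ l : List G, l.length = n → ∀ x, cfold l x = 1) : Group.IsNilpotent G := by
  have key : ∀ (n : ℕ) (x : G), (∀ l : List G, l.length = n → cfold l x = 1) →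
      x ∈ Subgroup.upperCentralSeries G n := by
    intro n
    induction n with
    | zero =>
      intro x hx
      have := hx [] rfl
      rw [Subgroup.upperCentralSeries_zero, Subgroup.mem_bot]
      exact this
    | succ n ih =>
      intro x hx
      rw [Subgroup.mem_upperCentralSeries_succ_iff]
      intro y
      have h1 := ih (y * x * y⁻¹ * x⁻¹) (fun l hl => by
        have := hx (l ++ [y]) (by simp [hl])
        rw [cfold_append] at this
        exact this)
      have h2 := (Subgroup.upperCentralSeries G n).inv_mem h1
      have h3 : (y * x * y⁻¹ * x⁻¹)⁻¹ = x * y * x⁻¹ * y⁻¹ := by group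
      rwa [h3] at h2
  refine ⟨n, ?_⟩
  rw [eq_top_iff]
  intro x _
  exact key n x fun l hl => h l hl x

theorem exists_H {S : Set ℕ} {G : Type} [Group G] [hs : Group.IsSolvable G] (hG : AbSecs S G) :
    ∃ H : Subgroup G, H.Normal ∧ H.index ≠ 0 ∧ Group.IsNilpotent (⁅H, H⁆ : Subgroup G) := by
  obtain ⟨d, hd⟩ := hs.solvable
  obtain ⟨H, hH, n, hn⟩ := cfold_all hG d
  refine ⟨H.normalCore, inferInstance, ?_, ?_⟩
  · have : H.FiniteIndex := ⟨hH⟩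
    exact Subgroup.FiniteIndex.index_ne_zero
  · refine nilp_of_cfold n fun l hl x => ?_
    have h1 := hn (l.map Subtype.val) (by simpa using hl) (by
      intro g hg
      obtain ⟨y, _, rfl⟩ := List.mem_map.1 hg
      exact Subgroup.commutator_mono H.normalCore_le H.normalCore_le y.2) x
    rw [hd, Subgroup.mem_bot] at h1
    refine Subtype.ext ?_
    rw [Subgroup.coe_one, ← h1]
    clear hl h1
    induction l with
    | nil => rfl
    | cons g l ih =>
      simp only [cfold, List.map_cons, List.foldr_cons] at ih ⊢
      rw [← ih]
      simp


theorem bdd_tors {Q A : Type} [CommGroup Q] [Group.FG Q] [AddCommGroup A] (σ : Representation ℤ Q A)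
    (F : Set A) (hF : F.Finite) (hgen : ∀ W : AddSubgroup A, F ⊆ W →
      (∀ g, ∀ w ∈ W, σ g w ∈ W) → W = ⊤) :
    ∃ e : ℕ, e ≠ 0 ∧ ∀ a : A, IsOfFinAddOrder a → e • a = 0 := by
  have hM : Monoid.FG Q := Group.fg_iff_monoid_fg.1 inferInstance
  have hN : IsNoetherianRing (MonoidAlgebra ℤ Q) :=
    Algebra.FiniteType.isNoetherianRing ℤ (MonoidAlgebra ℤ Q)
  have hsp : Submodule.span (MonoidAlgebra ℤ Q) (σ.asModuleEquiv.symm '' F) = ⊤ := by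
    let W0 := Submodule.span (MonoidAlgebra ℤ Q) (σ.asModuleEquiv.symm '' F)
    have h1 := hgen ((Submodule.toAddSubgroup W0).comap
      (σ.asModuleEquiv.symm.toLinearMap.toAddMonoidHom : A →+ σ.asModule)) (by
        intro x hx
        change σ.asModuleEquiv.symm x ∈ W0
        exact Submodule.subset_span ⟨x, hx, rfl⟩) (by
        intro g w hw
        change σ.asModuleEquiv.symm (σ g w) ∈ W0
        rw [Representation.asModuleEquiv_symm_map_rho]
        exact W0.smul_mem _ hw)
    rw [eq_top_iff]
    intro x _
    have h2 : σ.asModuleEquiv x ∈ (⊤ : AddSubgroup A) := trivial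
    rw [← h1] at h2
    change σ.asModuleEquiv.symm (σ.asModuleEquiv x) ∈ W0 at h2
    rwa [LinearEquiv.symm_apply_apply] at h2
  have hfin : Module.Finite (MonoidAlgebra ℤ Q) σ.asModule :=
    ⟨⟨(hF.image _).toFinset, by rw [Set.Finite.coe_toFinset]; exact hsp⟩⟩
  have hnoe : IsNoetherian (MonoidAlgebra ℤ Q) σ.asModule := inferInstance
  let f : ℕ →o Submodule (MonoidAlgebra ℤ Q) σ.asModule :=
    { toFun := fun n =>
        { carrier := {a | n.factorial • a = 0}
          zero_mem' := smul_zero _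
          add_mem' := by
            intro a b ha hb
            change _ • (a + b) = 0
            rw [smul_add, ha, hb, add_zero]
          smul_mem' := by
            intro c a ha
            change _ • (c • a) = 0
            rw [smul_comm, ha, smul_zero] }
      monotone' := by
        intro m n hmn a ha
        change _ • a = 0
        obtain ⟨k, hk⟩ := Nat.factorial_dvd_factorial hmn
        rw [hk, mul_comm, mul_smul, ha, smul_zero] }
  obtain ⟨n, hn⟩ := monotone_stabilizes_iff_noetherian.mpr hnoe f
  refine ⟨n.factorial, n.factorial_ne_zero, fun a ha => ?_⟩
  obtain ⟨k, hk, hka⟩ := ha.exists_nsmul_eq_zero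
  have h3 : (show σ.asModule from a) ∈ f (n + k) := by
    change (n + k).factorial • a = 0
    obtain ⟨j, hj⟩ := (Nat.dvd_factorial hk (Nat.le_add_left k n))
    rw [hj, mul_comm, mul_smul, hka, smul_zero]
  rw [← hn _ (Nat.le_add_right n k)] at h3
  exact h3

theorem comm_gen {G : Type} [Group G] (s : Set G) (P : Subgroup G)
    (hP : ∀ h ∈ Subgroup.closure s, ∀ x ∈ P, h * x * h⁻¹ ∈ P)
    (hs : ∀ a ∈ s, ∀ b ∈ s, ⁅a, b⁆ ∈ P) :
    ⁅Subgroup.closure s, Subgroup.closure s⁆ ≤ P := by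
  rw [Subgroup.commutator_le]
  intro a ha b hb
  refine Subgroup.closure_induction₂ (p := fun a b _ _ => ⁅a, b⁆ ∈ P) ?_ ?_ ?_ ?_ ?_ ?_ ?_ ha hb
  · intro x y hx hy; exact hs x hx y hy
  · intro x _; simp
  · intro x _; simp
  · intro x y z hx hy hz h1 h2
    have : ⁅x * y, z⁆ = x * ⁅y, z⁆ * x⁻¹ * ⁅x, z⁆ := by simp only [commutatorElement_def]; group
    rw [this]; exact P.mul_mem (hP _ hx _ h2) h1
  · intro y z x hy hz hx h1 h2
    have : ⁅x, y * z⁆ = ⁅x, y⁆ * (y * ⁅x, z⁆ * y⁻¹) := by simp only [commutatorElement_def]; group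
    rw [this]; exact P.mul_mem h1 (hP _ hy _ h2)
  · intro x y hx hy h1
    have : ⁅x⁻¹, y⁆ = x⁻¹ * ⁅x, y⁆⁻¹ * x⁻¹⁻¹ := by simp only [commutatorElement_def]; group
    rw [this]; exact hP _ (inv_mem hx) _ (P.inv_mem h1)
  · intro x y hx hy h1
    have : ⁅x, y⁻¹⁆ = y⁻¹ * ⁅x, y⁆⁻¹ * y⁻¹⁻¹ := by simp only [commutatorElement_def]; group
    rw [this]; exact hP _ (inv_mem hy) _ (P.inv_mem h1)

theorem nab_bdd {G : Type} [Group G] [Group.FG G] (H N : Subgroup G) (hi : H.index ≠ 0) [hN : N.Normal]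
    (hNH : N = ⁅H, H⁆) {A : Type} [AddCommGroup A] (q : N →* Multiplicative A)
    (hq : Function.Surjective q) (ρ : Representation ℤ (G ⧸ N) A)
    (hρ : ∀ (g : G) (x : N), ρ (QuotientGroup.mk g) (q x).toAdd =
      (q (MulAut.conjNormal g x)).toAdd) :
    ∃ e : ℕ, e ≠ 0 ∧ ∀ a : A, IsOfFinAddOrder a → e • a = 0 := by
  have : H.FiniteIndex := ⟨hi⟩
  have hHfg : Group.FG H := inferInstance
  obtain ⟨s, hs⟩ := (Group.fg_iff_subgroup_fg H).1 hHfg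
  let R := H.map (QuotientGroup.mk' N)
  have hsH : ∀ a ∈ s, a ∈ H := fun a ha => hs ▸ Subgroup.subset_closure ha
  let _ : CommGroup R := { (inferInstance : Group R) with
    mul_comm := by
      rintro ⟨a, x, hx, rfl⟩ ⟨b, y, hy, rfl⟩
      refine Subtype.ext ?_
      change ((x * y : G) : G ⧸ N) = ((y * x : G) : G ⧸ N)
      rw [QuotientGroup.eq, hNH]
      have := Subgroup.commutator_mem_commutator (H.inv_mem hy) (H.inv_mem hx)
      simpa [commutatorElement_def, mul_assoc] using this }
  have hRfg : Group.FG R := by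
    rw [Group.fg_iff_subgroup_fg]
    classical
    refine ⟨s.image (QuotientGroup.mk' N), ?_⟩
    rw [Finset.coe_image, ← MonoidHom.map_closure, hs]
  have hcm : ∀ a ∈ H, ∀ b ∈ H, ⁅a, b⁆ ∈ N := fun a ha b hb =>
    hNH ▸ Subgroup.commutator_mem_commutator ha hb
  let F : Set A := Set.range (fun ab : s × s => (q ⟨⁅(ab.1 : G), (ab.2 : G)⁆,
    hcm _ (hsH _ ab.1.2) _ (hsH _ ab.2.2)⟩).toAdd)
  refine bdd_tors (Q := R) (ρ.comp R.subtype) F (Set.finite_range _) ?_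
  intro W hFW hW
  let P : Subgroup G := (W.toSubgroup.comap q).map N.subtype
  have hP : ⁅Subgroup.closure (s : Set G), Subgroup.closure (s : Set G)⁆ ≤ P := by
    refine comm_gen _ _ ?_ ?_
    · rintro h hh _ ⟨x, hx, rfl⟩
      refine ⟨MulAut.conjNormal h x, ?_, by simp⟩
      have h1 := hW ⟨QuotientGroup.mk h, h, by rw [← hs]; exact hh, rfl⟩ _ hx
      have h2 := hρ h x
      change ρ (QuotientGroup.mk h) (q x).toAdd ∈ W at h1
      rw [h2] at h1
      exact h1
    · intro a ha b hb
      refine ⟨⟨⁅a, b⁆, hcm _ (hsH _ ha) _ (hsH _ hb)⟩, ?_, rfl⟩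
      exact hFW ⟨(⟨a, ha⟩, ⟨b, hb⟩), rfl⟩
  rw [hs, ← hNH] at hP
  rw [eq_top_iff]
  intro a _
  obtain ⟨x, hx⟩ := hq (Multiplicative.ofAdd a)
  obtain ⟨y, hy, hyx⟩ := hP x.2
  have : y = x := Subtype.ext hyx
  subst this
  have h5 : (q y).toAdd ∈ W := hy
  rw [hx] at h5
  exact h5

/-- A representation covered up to bounded index by a torsion-free minimax one. -/
def Good (S : Set ℕ) {Q C : Type} [Group Q] [AddCommGroup C] (σ : Representation ℤ Q C) : Prop :=
  ∃ (M : Type) (_ : AddCommGroup M) (ρ : Representation ℤ Q M) (f : M →ₗ[ℤ] C) (e : ℕ), AMin S M ∧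
    Module.IsTorsionFree ℤ M ∧ (∀ g m, f (ρ g m) = σ g (f m)) ∧ e ≠ 0 ∧
    ∀ c, ∃ m, f m = e • c

theorem good_of_bdd {S : Set ℕ} {Q C : Type} [Group Q] [AddCommGroup C] (σ : Representation ℤ Q C)
    (hC : AMin S C) (e : ℕ) (he : e ≠ 0) (h : ∀ a : C, IsOfFinAddOrder a → e • a = 0) :
    Good S σ := by
  let W : Submodule ℤ C := LinearMap.range ((e : ℤ) • (LinearMap.id : C →ₗ[ℤ] C))
  have hW : ∀ g, ∀ w ∈ W, σ g w ∈ W := by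
    rintro g _ ⟨c, rfl⟩
    exact ⟨σ g c, by simp⟩
  refine ⟨W, inferInstance,
    { toFun := fun g => (σ g).restrict (hW g)
      map_one' := by ext; simp
      map_mul' := by intros; ext; simp }, W.subtype, e, hC.sub W, ?_, ?_, he, ?_⟩
  · rw [Module.isTorsionFree_iff_smul_eq_zero]
    rintro n ⟨_, c, rfl⟩ hn
    by_contra hcon
    push Not at hcon
    obtain ⟨hn0, hc⟩ := hcon
    apply hc
    have h0 : n • ((e : ℤ) • c) = 0 := congrArg Subtype.val hn
    have h1 : IsOfFinAddOrder c := by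
      rw [isOfFinAddOrder_iff_zsmul_eq_zero]
      refine ⟨n * e, mul_ne_zero hn0 (by exact_mod_cast he), by rw [mul_smul]; exact h0⟩
    have := h c h1
    refine Subtype.ext ?_
    change (e : ℤ) • c = 0
    simpa using this
  · intro g m; rfl
  · intro c
    exact ⟨⟨e • c, c, by simp⟩, rfl⟩

theorem good_tensor {S : Set ℕ} {Q C D E : Type} [Group Q] [AddCommGroup C] [AddCommGroup D]
    [AddCommGroup E] (σ : Representation ℤ Q C) (τ : Representation ℤ Q D)
    (υ : Representation ℤ Q E) (hσ : Good S σ) (hτ : Good S τ) (β : C →ₗ[ℤ] D →ₗ[ℤ] E)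
    (hβ : ∀ g c d, β (σ g c) (τ g d) = υ g (β c d))
    (hsp : ∀ W : AddSubgroup E, (∀ c d, β c d ∈ W) → W = ⊤) : Good S υ := by
  obtain ⟨M, _, ρ, f, e, hM, htM, hf, he, hfe⟩ := hσ
  obtain ⟨M', _, ρ', f', e', hM', htM', hf', he', hfe'⟩ := hτ
  let F : TensorProduct ℤ M M' →ₗ[ℤ] E := TensorProduct.lift (β.compl₁₂ f f')
  have hF : ∀ x y, F (x ⊗ₜ[ℤ] y) = β (f x) (f' y) := fun x y => rfl
  refine ⟨TensorProduct ℤ M M', inferInstance,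
    { toFun := fun g => ((ρ.tprod ρ') g).toAddMonoidHom.toIntLinearMap
      map_one' := ?_
      map_mul' := ?_ }, F.toAddMonoidHom.toIntLinearMap, e * e', hM.tensor hM', ?_, ?_,
    mul_ne_zero he he', ?_⟩
  · refine LinearMap.ext fun a => ?_
    change (ρ.tprod ρ') 1 a = a
    rw [map_one]; rfl
  · intro g h
    refine LinearMap.ext fun a => ?_
    change (ρ.tprod ρ') (g * h) a = (ρ.tprod ρ') g ((ρ.tprod ρ') h a)
    rw [map_mul]; rfl
  · have hfl : Module.Flat ℤ M := inferInstance
    have hfl' : Module.Flat ℤ M' := inferInstance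
    have hfl2 : @Module.Flat ℤ (TensorProduct ℤ M M') _ _ TensorProduct.leftModule := inferInstance
    have h1 := @Module.Flat.isTorsionFree ℤ (TensorProduct ℤ M M') _ _ TensorProduct.leftModule hfl2
    rw [Module.isTorsionFree_iff_smul_eq_zero] at h1 ⊢
    intro n x hn
    refine h1 n x ?_
    rw [← hn]
  · intro g m
    change F ((ρ.tprod ρ') g m) = υ g (F m)
    induction m using TensorProduct.induction_on with
    | zero => simp
    | add x y hx hy => rw [map_add, map_add, hx, hy, map_add, map_add]
    | tmul x y =>
      rw [Representation.tprod_apply, TensorProduct.map_tmul, hF, hF, hf, hf', hβ]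
  · have := hsp (F.toAddMonoidHom.range.comap
      (DistribSMul.toAddMonoidHom E (e * e'))) ?_
    · intro c
      have h1 : c ∈ (⊤ : AddSubgroup E) := trivial
      rw [← this] at h1
      exact h1
    · intro c d
      obtain ⟨m, hm⟩ := hfe c
      obtain ⟨m', hm'⟩ := hfe' d
      refine ⟨m ⊗ₜ m', ?_⟩
      change F (m ⊗ₜ m') = (e * e') • β c d
      rw [hF, hm, hm', map_nsmul, map_nsmul, mul_comm, mul_smul]
      rfl


theorem exists_bilin {X N C D E : Type} [Group X] [Group N] [AddCommGroup C] [AddCommGroup D]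
    [AddCommGroup E] (q : X →* Multiplicative C) (hq : Function.Surjective q)
    (r : N →* Multiplicative D) (hr : Function.Surjective r) (b : X → N → E)
    (h1 : ∀ x y n, b (x * y) n = b x n + b y n) (h2 : ∀ x n m, b x (n * m) = b x n + b x m)
    (k1 : ∀ x n, q x = 1 → b x n = 0) (k2 : ∀ x n, r n = 1 → b x n = 0) :
    ∃ β : C →ₗ[ℤ] D →ₗ[ℤ] E, ∀ x n, β (q x).toAdd (r n).toAdd = b x n := by
  have hx : ∀ x y n, q x = q y → b x n = b y n := by
    intro x y n h
    have := h1 (x * y⁻¹) y n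
    rw [k1 (x * y⁻¹) n (by rw [map_mul, map_inv, h, mul_inv_cancel])] at this
    simpa using this
  have hn : ∀ x n m, r n = r m → b x n = b x m := by
    intro x n m h
    have := h2 x (n * m⁻¹) m
    rw [k2 x (n * m⁻¹) (by rw [map_mul, map_inv, h, mul_inv_cancel])] at this
    simpa using this
  choose s hs using fun c : C => hq (Multiplicative.ofAdd c)
  choose t ht using fun c : D => hr (Multiplicative.ofAdd c)
  let β1 : C → D →ₗ[ℤ] E := fun c => (AddMonoidHom.mk' (fun d => b (s c) (t d)) (by
    intro d d'
    rw [← h2]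
    apply hn
    rw [map_mul, ht, ht, ht]; rfl)).toIntLinearMap
  refine ⟨(AddMonoidHom.mk' β1 ?_).toIntLinearMap, ?_⟩
  · intro c c'
    refine LinearMap.ext fun d => ?_
    change b (s (c + c')) (t d) = b (s c) (t d) + b (s c') (t d)
    rw [← h1]
    apply hx
    rw [map_mul, hs, hs, hs]; rfl
  · intro x n
    change b (s _) (t _) = _
    rw [hx _ x _ (by rw [hs]; rfl), hn _ _ n (by rw [ht]; rfl)]

/-- A good section. -/
def GoodSec (S : Set ℕ) {G : Type} [Group G] (N X Y : Subgroup G) [N.Normal] [X.Normal] : Prop :=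
  ∃ (C : Type) (_ : AddCommGroup C) (q : X →* Multiplicative C)
    (σ : Representation ℤ (G ⧸ N) C), Function.Surjective q ∧ (∀ x : X, q x = 1 ↔ (x : G) ∈ Y) ∧
    (∀ (g : G) (x : X), σ (QuotientGroup.mk g) (q x).toAdd =
      (q (MulAut.conjNormal g x)).toAdd) ∧ AMin S C ∧ Good S σ

theorem goodSec_step {S : Set ℕ} {G : Type} [Group G] (hG : AbSecs S G) (N X X' X'' : Subgroup G)
    [hN : N.Normal] [hX : X.Normal] [hX' : X'.Normal] [hX'' : X''.Normal] (hXN : X ≤ N)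
    (e1 : X' = ⁅X, N⁆) (e2 : X'' = ⁅X', N⁆) (h0 : GoodSec S N N ⁅N, N⁆)
    (h1 : GoodSec S N X X') : GoodSec S N X' X'' := by
  have hX'X : X' ≤ X := by rw [e1]; exact Subgroup.commutator_le_left X N
  obtain ⟨E, _, p, υ, hp, hpk, hpe⟩ := exists_secN N X' X''
    (by rw [e2]; exact Subgroup.commutator_mono le_rfl (hX'X.trans hXN))
    (by rw [e2, Subgroup.commutator_comm])
  obtain ⟨D, _, r, τ, hr, hrk, hre, -, hτ⟩ := h0
  obtain ⟨C, _, q, σ, hq, hqk, hqe, -, hσ⟩ := h1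
  refine ⟨E, inferInstance, p, υ, hp, hpk, hpe, hG X' E p hp, ?_⟩
  have hm : ∀ (x : X) (n : N), ⁅(x : G), (n : G)⁆ ∈ X' := fun x n =>
    e1 ▸ Subgroup.commutator_mem_commutator x.2 n.2
  have hpc : ∀ (n : G) (_ : n ∈ N) (z : X'), p (MulAut.conjNormal n z) = p z := by
    intro n hn z
    rw [← mul_inv_eq_one, ← map_inv, ← map_mul, hpk, e2, Subgroup.commutator_comm]
    exact Subgroup.commutator_mem_commutator hn z.2
  let b : X → N → E := fun x n => (p ⟨⁅(x : G), (n : G)⁆, hm x n⟩).toAdd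
  have b1 : ∀ x y n, b (x * y) n = b x n + b y n := by
    intro x y n
    have : (⟨⁅((x * y : X) : G), (n : G)⁆, hm (x * y) n⟩ : X') =
        MulAut.conjNormal (x : G) ⟨⁅(y : G), (n : G)⁆, hm y n⟩ * ⟨⁅(x : G), (n : G)⁆, hm x n⟩ := by
      refine Subtype.ext ?_
      simp only [Subgroup.coe_mul, MulAut.conjNormal_apply, commutatorElement_def]
      group
    change (p _).toAdd = _
    rw [this, map_mul, hpc _ (hXN x.2), mul_comm]
    rfl
  have b2 : ∀ x n m, b x (n * m) = b x n + b x m := by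
    intro x n m
    have : (⟨⁅(x : G), ((n * m : N) : G)⁆, hm x (n * m)⟩ : X') =
        ⟨⁅(x : G), (n : G)⁆, hm x n⟩ * MulAut.conjNormal (n : G) ⟨⁅(x : G), (m : G)⁆, hm x m⟩ := by
      refine Subtype.ext ?_
      simp only [Subgroup.coe_mul, MulAut.conjNormal_apply, commutatorElement_def]
      group
    change (p _).toAdd = _
    rw [this, map_mul, hpc _ n.2]
    rfl
  have k1 : ∀ x n, q x = 1 → b x n = 0 := by
    intro x n h
    change p _ = 1
    rw [hpk, e2]
    exact Subgroup.commutator_mem_commutator ((hqk x).1 h) n.2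
  have k2 : ∀ x n, r n = 1 → b x n = 0 := by
    intro x n h
    let bx : N →* Multiplicative E :=
      { toFun := fun n => Multiplicative.ofAdd (b x n)
        map_one' := by
          have := b2 x 1 1
          rw [mul_one] at this
          exact (left_eq_add (a := b x 1)).1 this
        map_mul' := fun n m => b2 x n m }
    have h3 : ⁅N, N⁆ ≤ bx.ker.map N.subtype := by
      rw [Subgroup.commutator_le]
      intro u hu v hv
      refine ⟨⁅(⟨u, hu⟩ : N), ⟨v, hv⟩⁆, ?_, rfl⟩
      change bx _ = 1
      rw [map_commutatorElement]
      exact commutatorElement_eq_one_iff_mul_comm.2 (mul_comm _ _)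
    obtain ⟨m, hmk, hmn⟩ := h3 ((hrk n).1 h)
    have : m = n := Subtype.ext hmn
    rw [← this]
    exact hmk
  obtain ⟨β, hβ⟩ := exists_bilin q hq r hr b b1 b2 k1 k2
  refine good_tensor σ τ υ hσ hτ β ?_ ?_
  · intro g c d
    obtain ⟨g, rfl⟩ := QuotientGroup.mk_surjective g
    obtain ⟨x, hx⟩ := hq (Multiplicative.ofAdd c)
    obtain ⟨n, hn⟩ := hr (Multiplicative.ofAdd d)
    have hc : c = (q x).toAdd := by rw [hx]; rfl
    have hd : d = (r n).toAdd := by rw [hn]; rfl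
    rw [hc, hd, hqe, hre, hβ, hβ]
    change _ = υ (QuotientGroup.mk g) (p _).toAdd
    rw [hpe]
    change (p _).toAdd = _
    congr 2
    refine Subtype.ext ?_
    simp only [MulAut.conjNormal_apply, commutatorElement_def]
    group
  · intro W hW
    have h4 : ⁅X, N⁆ ≤ (W.toSubgroup.comap p).map X'.subtype := by
      rw [Subgroup.commutator_le]
      intro x hx n hn
      refine ⟨⟨⁅x, n⁆, hm ⟨x, hx⟩ ⟨n, hn⟩⟩, ?_, rfl⟩
      have := hW (q ⟨x, hx⟩).toAdd (r ⟨n, hn⟩).toAdd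
      rw [hβ] at this
      exact this
    rw [← e1] at h4
    rw [eq_top_iff]
    intro a _
    obtain ⟨x, hx⟩ := hp (Multiplicative.ofAdd a)
    obtain ⟨y, hy, hyx⟩ := h4 x.2
    have : y = x := Subtype.ext hyx
    subst this
    have h5 : (p y).toAdd ∈ W := hy
    rw [hx] at h5
    exact h5

/-- Lower central series of a subgroup, inside the big group. -/
def LL {G : Type} [Group G] (N : Subgroup G) : ℕ → Subgroup G
  | 0 => N
  | i + 1 => ⁅LL N i, N⁆

instance LL_normal {G : Type} [Group G] (N : Subgroup G) [N.Normal] (i : ℕ) : (LL N i).Normal := by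
  induction i with
  | zero => assumption
  | succ i ih => exact Subgroup.commutator_normal _ _

theorem LL_le {G : Type} [Group G] (N : Subgroup G) [N.Normal] (i : ℕ) : LL N i ≤ N := by
  induction i with
  | zero => exact le_rfl
  | succ i ih => exact Subgroup.commutator_le_right _ _

theorem LL_eq {G : Type} [Group G] (N : Subgroup G) (i : ℕ) :
    LL N i = N.lowerCentralSeries i := by
  induction i with
  | zero => rfl
  | succ i ih => rw [LL, ih]; rfl

theorem LL_bot {G : Type} [Group G] (N : Subgroup G) (h : Group.IsNilpotent N) :
    ∃ n, LL N n = ⊥ := by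
  obtain ⟨n, hn⟩ := (Subgroup.isNilpotent_iff_lowerCentralSeries N).1 h
  exact ⟨n, by rw [LL_eq, hn]⟩

theorem goodSec_LL {S : Set ℕ} {G : Type} [Group G] [Group.FG G] (hG : AbSecs S G) (H N : Subgroup G)
    (hi : H.index ≠ 0) [hN : N.Normal] (hNH : N = ⁅H, H⁆) (i : ℕ) :
    GoodSec S N (LL N i) (LL N (i + 1)) := by
  have h0 : GoodSec S N N ⁅N, N⁆ := by
    obtain ⟨E, _, p, υ, hp, hpk, hpe⟩ := exists_secN N N ⁅N, N⁆ le_rfl le_rfl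
    obtain ⟨e, he, h⟩ := nab_bdd H N hi hNH p hp υ hpe
    exact ⟨E, inferInstance, p, υ, hp, hpk, hpe, hG N E p hp,
      good_of_bdd υ (hG N E p hp) e he h⟩
  induction i with
  | zero => exact h0
  | succ i ih => exact goodSec_step hG N (LL N i) _ _ (LL_le N i) rfl rfl h0 ih


theorem tors_gen {G : Type} [Group G] (X Y : Subgroup G) [X.Normal] [Y.Normal] (h : ⁅X, X⁆ ≤ Y)
    (s : Set G) (hs : Subgroup.closure s = X) (ht : ∀ a ∈ s, ∃ k : ℕ, 0 < k ∧ a ^ k ∈ Y) :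
    ∀ x ∈ X, ∃ k : ℕ, 0 < k ∧ x ^ k ∈ Y := by
  obtain ⟨A, _, q, -, -, hk, -⟩ := exists_sec X Y h
  have key : X ≤ ((CommGroup.torsion (Multiplicative A)).comap q).map X.subtype := by
    have : Subgroup.closure s ≤ ((CommGroup.torsion (Multiplicative A)).comap q).map X.subtype := by
      rw [Subgroup.closure_le]
      intro a ha
      have haX : a ∈ X := hs ▸ Subgroup.subset_closure ha
      refine ⟨⟨a, haX⟩, ?_, rfl⟩
      obtain ⟨k, hk0, hka⟩ := ht a ha
      change IsOfFinOrder (q ⟨a, haX⟩)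
      rw [isOfFinOrder_iff_pow_eq_one]
      refine ⟨k, hk0, ?_⟩
      rw [← map_pow, hk]
      exact hka
    rwa [hs] at this
  intro x hx
  obtain ⟨y, hy, rfl⟩ := key hx
  have h1 : IsOfFinOrder (q y) := hy
  obtain ⟨k, hk0, hk1⟩ := isOfFinOrder_iff_pow_eq_one.1 h1
  refine ⟨k, hk0, ?_⟩
  rw [← map_pow, hk] at hk1
  exact hk1

theorem comm_pow {G : Type} [Group G] (X P Y : Subgroup G) [hX : X.Normal] [P.Normal] [hY : Y.Normal]
    (hXP : X ≤ P) (hY2 : ⁅⁅X, P⁆, P⁆ ≤ Y) (x y : G) (hx : x ∈ X) (hy : y ∈ P) (k : ℕ) :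
    ∃ z ∈ Y, ⁅x ^ k, y⁆ = ⁅x, y⁆ ^ k * z := by
  induction k with
  | zero => exact ⟨1, Y.one_mem, by simp⟩
  | succ k ih =>
    obtain ⟨z, hz, e⟩ := ih
    have hm : ⁅⁅x, y⁆ ^ k, x⁆ ∈ Y := hY2 (Subgroup.commutator_mem_commutator
      (Subgroup.pow_mem _ (Subgroup.commutator_mem_commutator hx hy) k) (hXP hx))
    have e2 : ⁅x ^ (k + 1), y⁆ = x * ⁅x ^ k, y⁆ * x⁻¹ * ⁅x, y⁆ := by
      rw [pow_succ']; simp only [commutatorElement_def]; group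
    refine ⟨⁅x, y⁆⁻¹ * ((⁅x, y⁆ ^ k)⁻¹ * (⁅⁅x, y⁆ ^ k, x⁆⁻¹) * ⁅x, y⁆ ^ k * (x * z * x⁻¹)) * ⁅x, y⁆,
      ?_, ?_⟩
    · have h1 := hY.conj_mem _ (Y.inv_mem hm) (⁅x, y⁆ ^ k)⁻¹
      rw [inv_inv] at h1
      have h2 := hY.conj_mem _ (Y.mul_mem h1 (hY.conj_mem _ hz x)) ⁅x, y⁆⁻¹
      rw [inv_inv] at h2
      exact h2
    · rw [e2, e, pow_succ]
      generalize ⁅x, y⁆ = w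
      simp only [commutatorElement_def]
      group

theorem tors_sub {G : Type} [Group G] (N : Subgroup G) [hN : N.Normal] (hnil : Group.IsNilpotent N) :
    ∃ T : Subgroup G, T.Normal ∧ ∀ g, g ∈ T ↔ g ∈ N ∧ IsOfFinOrder g := by
  let s : Set G := {g | g ∈ N ∧ IsOfFinOrder g}
  let P := Subgroup.closure s
  have hcs : ∀ g x, x ∈ s → g * x * g⁻¹ ∈ s := fun g x hx =>
    ⟨hN.conj_mem _ hx.1 g, (MulAut.conj g).toMonoidHom.isOfFinOrder hx.2⟩
  have hP : P.Normal := by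
    refine ⟨fun x hx g => ?_⟩
    have : P ≤ P.comap (MulAut.conj g).toMonoidHom := by
      change Subgroup.closure s ≤ _
      rw [Subgroup.closure_le]
      intro a ha
      exact Subgroup.subset_closure (hcs g a ha)
    exact this hx
  have hPN : P ≤ N := (Subgroup.closure_le _).2 fun x hx => hx.1
  have hLL : ∀ i, LL P i ≤ LL N i := by
    intro i
    induction i with
    | zero => exact hPN
    | succ i ih => exact Subgroup.commutator_mono ih hPN
  have hstep : ∀ i, ∀ x ∈ LL P i, ∃ k : ℕ, 0 < k ∧ x ^ k ∈ LL P (i + 1) := by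
    intro i
    induction i with
    | zero =>
      refine tors_gen P ⁅P, P⁆ le_rfl s rfl ?_
      intro a ha
      obtain ⟨k, hk, h1⟩ := isOfFinOrder_iff_pow_eq_one.1 ha.2
      exact ⟨k, hk, h1 ▸ Subgroup.one_mem _⟩
    | succ i ih =>
      refine tors_gen (LL P (i + 1)) (LL P (i + 2))
        (Subgroup.commutator_mono le_rfl (LL_le P (i + 1))) _ rfl ?_
      rintro _ ⟨x, hx, y, hy, rfl⟩
      obtain ⟨k, hk, hxk⟩ := ih x hx
      obtain ⟨z, hz, e⟩ := comm_pow (LL P i) P (LL P (i + 2)) (LL_le P i) le_rfl x y hx hy k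
      refine ⟨k, hk, ?_⟩
      have h1 : ⁅x ^ k, y⁆ ∈ LL P (i + 2) := Subgroup.commutator_mem_commutator hxk hy
      rw [e] at h1
      exact (Subgroup.mul_mem_cancel_right _ hz).1 h1
  have hall : ∀ i, ∀ x ∈ P, ∃ k : ℕ, 0 < k ∧ x ^ k ∈ LL P i := by
    intro i x hx
    induction i with
    | zero => exact ⟨1, one_pos, by rw [pow_one]; exact hx⟩
    | succ i ih =>
      obtain ⟨k, hk, h1⟩ := ih
      obtain ⟨j, hj, h2⟩ := hstep i _ h1
      exact ⟨k * j, Nat.mul_pos hk hj, by rw [pow_mul]; exact h2⟩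
  refine ⟨P, hP, fun g => ⟨fun hg => ⟨hPN hg, ?_⟩, fun hg => Subgroup.subset_closure hg⟩⟩
  obtain ⟨n, hn⟩ := LL_bot N hnil
  obtain ⟨k, hk, h1⟩ := hall n g hg
  have h2 := hLL n h1
  rw [hn, Subgroup.mem_bot] at h2
  exact isOfFinOrder_iff_pow_eq_one.2 ⟨k, hk, h2⟩

/-- One admissible step of the series. -/
def StepOK (S : Set ℕ) {G : Type} [Group G] (N : Subgroup G) [N.Normal] (Y X : Subgroup G) : Prop :=
  Y ≤ X ∧ X.Normal ∧ (∀ n t : G, n ∈ N → t ∈ X → n * t * n⁻¹ * t⁻¹ ∈ Y) ∧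
  (Y.relIndex X = 0 →
        ∃ M : Rep.{0} ℤ (G ⧸ N), NiceRep S M ∧
          ∃ φ : M → G,
            (∀ m : M, φ m ∈ X) ∧
            (∀ m m' : M, (φ (m + m'))⁻¹ * (φ m * φ m') ∈ Y) ∧
            (∀ t : G, t ∈ X → ∃ m : M, (φ m)⁻¹ * t ∈ Y) ∧
            (∀ (g : G) (m : M),
              (φ (M.ρ (QuotientGroup.mk g) m))⁻¹ * (g * φ m * g⁻¹) ∈ Y))

theorem chain_fin {α : Type} (R : α → α → Prop) (a b : α) (h : Relation.ReflTransGen R a b) :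
    ∃ (r : ℕ) (T : Fin (r + 1) → α), T 0 = a ∧ T (Fin.last r) = b ∧
      ∀ i : Fin r, R (T i.castSucc) (T i.succ) := by
  induction h with
  | refl => exact ⟨0, fun _ => a, rfl, rfl, fun i => i.elim0⟩
  | @tail b c _ hbc ih =>
    obtain ⟨r, T, h0, h1, h2⟩ := ih
    refine ⟨r + 1, Fin.snoc (α := fun _ => α) T c, ?_, ?_, ?_⟩
    · rw [← Fin.castSucc_zero, Fin.snoc_castSucc, h0]
    · rw [Fin.snoc_last]
    · intro i
      induction i using Fin.lastCases with
      | last => rw [Fin.snoc_castSucc, Fin.succ_last, Fin.snoc_last, h1]; exact hbc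
      | cast j =>
        rw [Fin.snoc_castSucc, Fin.succ_castSucc, Fin.snoc_castSucc]
        exact h2 j

theorem two_steps {S : Set ℕ} {G : Type} [Group G] (N T L L' : Subgroup G) [hN : N.Normal]
    [hT : T.Normal] [hL : L.Normal] [hL' : L'.Normal] (hLL : L' ≤ L)
    (hc : ∀ n t : G, n ∈ N → t ∈ L → n * t * n⁻¹ * t⁻¹ ∈ L') (h : GoodSec S N L L') :
    Relation.ReflTransGen (StepOK S N) (T ⊓ L') (T ⊓ L) := by
  obtain ⟨C, _, q, σ, hq, hqk, hqe, hC, M, _, ρ, f, e, hM, htf, hf, he, hfe⟩ := h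
  let U0 : Subgroup L := f.range.toAddSubgroup.toSubgroup.comap q
  have hU0 : ∀ x : L, x ∈ U0 ↔ ∃ m, f m = (q x).toAdd := fun x => Iff.rfl
  let U : Subgroup G := U0.map L.subtype
  have hUL : U ≤ L := by rintro _ ⟨x, _, rfl⟩; exact x.2
  have hmU : ∀ x : L, (x : G) ∈ U ↔ ∃ m, f m = (q x).toAdd := by
    intro x
    rw [← hU0]
    constructor
    · rintro ⟨y, hy, hyx⟩
      rwa [← Subtype.ext hyx]
    · intro hx; exact ⟨x, hx, rfl⟩
  have hLU : L' ≤ U := by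
    intro x hx
    refine (hmU ⟨x, hLL hx⟩).2 ⟨0, ?_⟩
    rw [(hqk ⟨x, hLL hx⟩).2 hx, map_zero]; rfl
  have hUn : U.Normal := by
    refine ⟨fun x hx g => ?_⟩
    obtain ⟨m, hm⟩ := (hmU ⟨x, hUL hx⟩).1 hx
    refine (hmU ⟨g * x * g⁻¹, hL.conj_mem _ (hUL hx) g⟩).2 ⟨ρ (QuotientGroup.mk g) m, ?_⟩
    rw [hf, hm, hqe]
    rfl
  have hcT : ∀ n t : G, t ∈ T → n * t * n⁻¹ * t⁻¹ ∈ T := fun n t ht =>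
    T.mul_mem (hT.conj_mem _ ht n) (T.inv_mem ht)
  have hY : ∀ (x y : L) (z : G), z ∈ T → z = (x : G)⁻¹ * y → q x = q y → z ∈ T ⊓ L' := by
    intro x y z hz e h
    refine ⟨hz, ?_⟩
    subst e
    have := (hqk (x⁻¹ * y)).1 (by rw [map_mul, map_inv, h, inv_mul_cancel])
    exact this
  have st1 : StepOK S N (T ⊓ L') (T ⊓ U) := by
    refine ⟨inf_le_inf_left _ hLU, inferInstance, fun n t hn ht =>
      ⟨hcT n t ht.1, hc n t hn (hUL ht.2)⟩, fun _ => ?_⟩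
    let M' : Submodule ℤ M := AddSubgroup.toIntSubmodule
      { carrier := {m | ∃ x : L, (x : G) ∈ T ∧ (q x).toAdd = f m}
        zero_mem' := ⟨1, T.one_mem, by rw [map_one, map_zero]; rfl⟩
        add_mem' := by
          rintro a b ⟨x, hx, hxa⟩ ⟨y, hy, hyb⟩
          exact ⟨x * y, T.mul_mem hx hy, by rw [map_mul, map_add, ← hxa, ← hyb]; rfl⟩
        neg_mem' := by
          rintro a ⟨x, hx, hxa⟩
          exact ⟨x⁻¹, T.inv_mem hx, by rw [map_inv, map_neg, ← hxa]; rfl⟩ }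
    have hM' : ∀ g, ∀ m ∈ M', ρ g m ∈ M' := by
      rintro g m ⟨x, hx, hxm⟩
      obtain ⟨g, rfl⟩ := QuotientGroup.mk_surjective g
      refine ⟨MulAut.conjNormal g x, hT.conj_mem _ hx g, ?_⟩
      rw [hf, ← hxm, hqe]
    let ρ' : Representation ℤ (G ⧸ N) M' :=
      { toFun := fun g => (ρ g).restrict (hM' g)
        map_one' := by ext; simp
        map_mul' := by intros; ext; simp }
    choose φ hφT hφ using fun m : M' => m.2
    have hAM : AMin S M' := hM.sub M'
    refine ⟨Rep.of ρ', ⟨?_, hAM.finiteRank, hAM.spectrum⟩, fun m => (φ m : G), ?_, ?_, ?_, ?_⟩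
    · intro m hm hfin
      apply hm
      obtain ⟨k, hk, h1⟩ := hfin.exists_nsmul_eq_zero
      have h2 : k • (m : M) = 0 := congrArg Subtype.val h1
      rw [Module.isTorsionFree_iff_smul_eq_zero] at htf
      have h3 := htf (k : ℤ) (m : M) (by rw [natCast_zsmul]; exact h2)
      rcases h3 with h3 | h3
      · exfalso
        have : k = 0 := by exact_mod_cast h3
        omega
      · exact Subtype.ext h3
    · intro m
      exact ⟨hφT m, (hmU (φ m)).2 ⟨m, (hφ m).symm⟩⟩
    · intro m m'
      refine hY (φ (m + m')) (φ m * φ m') _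
        (T.mul_mem (T.inv_mem (hφT _)) (T.mul_mem (hφT _) (hφT _))) rfl ?_
      rw [map_mul]
      apply Multiplicative.toAdd.injective
      rw [toAdd_mul, hφ, hφ, hφ]
      exact map_add f (m : M) (m' : M)
    · intro t ht
      obtain ⟨m, hm⟩ := (hmU ⟨t, hUL ht.2⟩).1 ht.2
      let m1 : M' := ⟨m, ⟨t, hUL ht.2⟩, ht.1, hm.symm⟩
      refine ⟨m1, hY (φ m1) ⟨t, hUL ht.2⟩ _ (T.mul_mem (T.inv_mem (hφT _)) ht.1) rfl ?_⟩
      apply Multiplicative.toAdd.injective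
      rw [hφ]
      exact hm
    · intro g m
      refine hY (φ (ρ' (QuotientGroup.mk g) m)) (MulAut.conjNormal g (φ m)) _
        (T.mul_mem (T.inv_mem (hφT _)) (hT.conj_mem _ (hφT _) g)) rfl ?_
      apply Multiplicative.toAdd.injective
      rw [hφ, ← hqe, hφ]
      exact hf _ _
  have st2 : StepOK S N (T ⊓ U) (T ⊓ L) := by
    refine ⟨inf_le_inf_left _ hUL, inferInstance, fun n t hn ht =>
      ⟨hcT n t ht.1, hLU (hc n t hn ht.2)⟩, fun h0 => ?_⟩
    exfalso
    have h1 : U.relIndex L = 0 := by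
      refine Subgroup.relIndex_eq_zero_of_le_right (K := T ⊓ L) inf_le_right ?_
      rw [← Subgroup.inf_relIndex_right] at h0 ⊢
      convert h0 using 2
      ext x
      simp only [Subgroup.mem_inf]
      tauto
    have h2 : U.subgroupOf L = U0 := by
      ext x
      rw [Subgroup.mem_subgroupOf, hmU, hU0]
    rw [Subgroup.relIndex, h2, Subgroup.index_comap_of_surjective _ hq,
      AddSubgroup.index_toSubgroup] at h1
    have hfin : Finite (C ⧸ f.range) := by
      refine (hC.quo f.range).finite_of_bdd e he ?_
      intro a
      obtain ⟨c, rfl⟩ := Submodule.Quotient.mk_surjective _ a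
      rw [← Submodule.Quotient.mk_smul, Submodule.Quotient.mk_eq_zero]
      exact hfe c
    have hfin2 : Finite (C ⧸ f.range.toAddSubgroup) := hfin
    exact Nat.card_ne_zero.2 ⟨inferInstance, hfin2⟩ h1
  exact (Relation.ReflTransGen.single st1).tail st2

theorem main_thm (G : Type) [Group G] (hfg : Group.FG G)
    (hsol : Group.IsSolvable G) (hmm : IsMinimax G) : MemClassU G := by
  have hG := hmm.abSecs
  refine ⟨⟨hsol, ?_⟩, ?_⟩
  · intro H K hK hcomm
    let _ : CommGroup (H ⧸ K) := { (inferInstance : Group (H ⧸ K)) with mul_comm := hcomm }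
    have h1 : AMin (groupSpectrum G) (Additive (H ⧸ K)) :=
      hG H (Additive (H ⧸ K)) (QuotientGroup.mk' K) (QuotientGroup.mk'_surjective K)
    obtain ⟨⟨n, hn⟩, h3⟩ := h1.finiteRank
    refine ⟨⟨n, fun k ⟨f, hf⟩ => hn k ⟨MonoidHom.toAdditiveRight f, hf⟩⟩, fun p hp => h3 p hp⟩
  · obtain ⟨H, hH, hi, hnil⟩ := exists_H hG
    let N : Subgroup G := ⁅H, H⁆
    have hN : N.Normal := Subgroup.commutator_normal _ _
    refine ⟨N, hN, hnil, inferInstance, ?_, ?_⟩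
    · refine ⟨H.map (QuotientGroup.mk' N), ?_, ?_⟩
      · have := Subgroup.index_map_dvd H (QuotientGroup.mk'_surjective N)
        exact fun h0 => hi (by rw [h0] at this; exact Nat.eq_zero_of_zero_dvd this)
      · rintro ⟨a, x, hx, rfl⟩ ⟨b, y, hy, rfl⟩
        refine Subtype.ext ?_
        change ((x * y : G) : G ⧸ N) = ((y * x : G) : G ⧸ N)
        rw [QuotientGroup.eq]
        have := Subgroup.commutator_mem_commutator (H.inv_mem hy) (H.inv_mem hx)
        simpa [commutatorElement_def, mul_assoc] using this
    · obtain ⟨T, hT, hTm⟩ := tors_sub N hnil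
      obtain ⟨n, hn⟩ := LL_bot N hnil
      have hchain : ∀ i, Relation.ReflTransGen (StepOK (groupSpectrum G) N) (T ⊓ LL N i) T := by
        intro i
        induction i with
        | zero =>
          have : T ⊓ LL N 0 = T := inf_eq_left.2 fun x hx => ((hTm x).1 hx).1
          rw [this]
        | succ i ih =>
          refine Relation.ReflTransGen.trans (two_steps N T (LL N i) (LL N (i + 1)) ?_ ?_
            (goodSec_LL hG H N hi rfl i)) ih
          · exact Subgroup.commutator_le_left _ _
          · intro m t hm ht
            have : ⁅m, t⁆ ∈ ⁅N, LL N i⁆ := Subgroup.commutator_mem_commutator hm ht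
            rw [Subgroup.commutator_comm] at this
            exact this
      have hch := hchain n
      rw [hn, inf_bot_eq] at hch
      obtain ⟨r, c, h0, hl, hs⟩ := chain_fin _ _ _ hch
      refine ⟨r, c, Fin.monotone_iff_le_succ.2 fun i => (hs i).1, h0, ?_, ?_, ?_, ?_⟩
      · rw [hl]; ext g; exact hTm g
      · intro i g t ht
        induction i using Fin.cases with
        | zero =>
          rw [h0, Subgroup.mem_bot] at ht ⊢
          rw [ht]; simp
        | succ i => exact (hs i).2.1.conj_mem _ ht g
      · intro i m t hm ht
        exact (hs i).2.2.1 m t hm ht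
      · intro i hr
        exact (hs i).2.2.2 hr

/-- Every finitely generated solvable minimax group lies in the class `𝒰`. -/
theorem fg_solvable_minimax_mem_classU (G : Type) [Group G] (hfg : Group.FG G)
    (hsol : IsSolvable G) (hmm : IsMinimax G) : MemClassU G := by
  exact main_thm G hfg hsol hmm

end
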